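/- arXiv:2412.00865 — 3 statements merged into one kernel-verified Lean document; each statement's English description precedes it below -/
import Mathlib

section
/- There exists a constant C > 0, independent of η, such that for every η > 0 and every smooth compactly supported ψ : ℝ^d → ℂ, writing C_η := {v ∈ ℝ^d : |v₁| ≤ η^{−1/3} ≤ |v'|} and A_η^c := {v ∈ ℝ^d : |v₁| ≥ η^{−1/3}}, one has ∫_{C_η} |ψ(v)|² dv ≤ C η^{−2/3} ( ∫_{ℝ^d} |∇(ψ/M)|² M² dv + η ∫_{A_η^c} |v₁| |ψ(v)|² dv ). -/
open MeasureTheory Real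

/-!
On a line `t ↦ v + t • e` the fundamental theorem of calculus and Cauchy–Schwarz bound `‖f v‖²` by
`2 ‖f (v + T • e)‖² + 2 T ∫₀ᵀ ‖∂ₑ f‖²`. Take `f = ψ / M` and `T = 2 r` with `r = η ^ (-1/3)`: this
moves a point with `|v₁| ≤ r` into `{|v₁| ≥ r}`, where `|v₁| / r ≥ 1` brings in the last integral.
Since `v'` does not change along the line, the condition `r ≤ |v'|` keeps all norms met on the way
comparable to `‖v‖`; hence so are the values of `M`, which can be pulled through the estimate.
Integrating in `v`, Fubini and translation invariance give the claim.
-/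

section Line

theorem sq_intervalIntegral_le {g : ℝ → ℝ} {a b : ℝ} (hab : a ≤ b)
    (hg : IntervalIntegrable g volume a b)
    (hg_sq : IntervalIntegrable (fun t => g t ^ 2) volume a b) :
    (∫ t in a..b, g t) ^ 2 ≤ (b - a) * ∫ t in a..b, g t ^ 2 := by
  rcases hab.eq_or_lt with rfl | hlt
  · simp
  have hba : 0 < b - a := sub_pos.2 hlt
  have jensen : (⨍ t in a..b, g t) ^ 2 ≤ ⨍ t in a..b, g t ^ 2 :=
    (even_two.convexOn_pow (𝕜 := ℝ)).map_set_average_le (by fun_prop) isClosed_univ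
      (by simp [Set.uIoc_of_le hab, hlt]) (by simp [Set.uIoc_of_le hab]) (by simp)
      hg.def' hg_sq.def'
  rw [interval_average_eq_div, interval_average_eq_div, div_pow, div_le_div_iff₀ (by positivity)
    hba] at jensen
  exact le_of_mul_le_mul_right (by linarith) hba

variable {E F : Type*} [NormedAddCommGroup E] [NormedSpace ℝ E]
  [NormedAddCommGroup F] [NormedSpace ℝ F]

theorem continuous_fderiv_add_smul_apply {f : E → F} (hf : ContDiff ℝ 1 f) (v e : E) :
    Continuous fun t : ℝ => fderiv ℝ f (v + t • e) e :=
  ((hf.continuous_fderiv one_ne_zero).comp (by fun_prop)).clm_apply continuous_const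

theorem norm_sub_sq_le_mul_integral_norm_fderiv_sq {f : E → F} (hf : ContDiff ℝ 1 f) (v e : E)
    {T : ℝ} (hT : 0 ≤ T) :
    ‖f (v + T • e) - f v‖ ^ 2 ≤ T * ∫ t in (0 : ℝ)..T, ‖fderiv ℝ f (v + t • e) e‖ ^ 2 := by
  have hderiv := continuous_fderiv_add_smul_apply hf v e
  have hline (t : ℝ) : HasDerivAt (fun t : ℝ => f (v + t • e)) (fderiv ℝ f (v + t • e) e) t := by
    have hshift : HasDerivAt (fun t : ℝ => v + t • e) e t := by
      simpa using ((hasDerivAt_id t).smul_const e).const_add v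
    exact (hf.differentiable one_ne_zero _).hasFDerivAt.comp_hasDerivAt t hshift
  have hdisplacement : ‖f (v + T • e) - f v‖ ≤ ∫ t in (0 : ℝ)..T, ‖fderiv ℝ f (v + t • e) e‖ := by
    simpa using norm_sub_le_integral_of_norm_deriv_le_of_le hT
      (fun t _ => (hline t).continuousAt.continuousWithinAt)
      (fun t _ => (hline t).differentiableAt.differentiableWithinAt)
      (.of_forall fun t _ => (congrArg norm (hline t).deriv).le)
      (hderiv.norm.intervalIntegrable 0 T)
  calc ‖f (v + T • e) - f v‖ ^ 2 ≤ (∫ t in (0 : ℝ)..T, ‖fderiv ℝ f (v + t • e) e‖) ^ 2 := by gcongr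
    _ ≤ (T - 0) * ∫ t in (0 : ℝ)..T, ‖fderiv ℝ f (v + t • e) e‖ ^ 2 :=
      sq_intervalIntegral_le hT (hderiv.norm.intervalIntegrable 0 T)
        ((hderiv.norm.pow 2).intervalIntegrable 0 T)
    _ = _ := by rw [sub_zero]

theorem norm_sq_le_norm_sq_add_integral_norm_fderiv_sq {f : E → F} (hf : ContDiff ℝ 1 f) (v e : E)
    {T : ℝ} (hT : 0 ≤ T) :
    ‖f v‖ ^ 2 ≤
      2 * (‖f (v + T • e)‖ ^ 2 + T * ∫ t in (0 : ℝ)..T, ‖fderiv ℝ f (v + t • e) e‖ ^ 2) := by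
  calc ‖f v‖ ^ 2 ≤ (‖f (v + T • e)‖ + ‖f (v + T • e) - f v‖) ^ 2 := by
        gcongr
        exact norm_le_norm_add_norm_sub _ _
    _ ≤ 2 * (‖f (v + T • e)‖ ^ 2 + ‖f (v + T • e) - f v‖ ^ 2) := add_sq_le
    _ ≤ _ := by
        gcongr
        exact norm_sub_sq_le_mul_integral_norm_fderiv_sq hf v e hT

theorem mul_norm_sq_le_of_le_mul_along_segment {f : E → F} (hf : ContDiff ℝ 1 f) {w : E → ℝ}
    (hw : Continuous w) {v e : E} (hwv : 0 ≤ w v) {K T : ℝ} (hT : 0 ≤ T)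
    (hwK : ∀ t ∈ Set.Icc 0 T, w v ≤ K * w (v + t • e)) :
    w v * ‖f v‖ ^ 2 ≤ 2 * K * (w (v + T • e) * ‖f (v + T • e)‖ ^ 2 +
      T * ∫ t in (0 : ℝ)..T, w (v + t • e) * ‖fderiv ℝ f (v + t • e) e‖ ^ 2) := by
  have hderiv_sq := (continuous_fderiv_add_smul_apply hf v e).norm.pow 2
  have hw_line : Continuous fun t : ℝ => w (v + t • e) := by fun_prop
  have hend : w v * ‖f (v + T • e)‖ ^ 2 ≤ K * (w (v + T • e) * ‖f (v + T • e)‖ ^ 2) := by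
    rw [← mul_assoc]
    gcongr
    exact hwK T ⟨hT, le_rfl⟩
  have hpath : w v * ∫ t in (0 : ℝ)..T, ‖fderiv ℝ f (v + t • e) e‖ ^ 2 ≤
      K * ∫ t in (0 : ℝ)..T, w (v + t • e) * ‖fderiv ℝ f (v + t • e) e‖ ^ 2 := by
    simp only [← intervalIntegral.integral_const_mul, ← mul_assoc]
    refine intervalIntegral.integral_mono_on hT ((hderiv_sq.const_mul _).intervalIntegrable 0 T)
      (((hw_line.const_mul K).mul hderiv_sq).intervalIntegrable 0 T) fun t ht => ?_
    gcongr
    exact hwK t ht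
  have hpoint := mul_le_mul_of_nonneg_left
    (norm_sq_le_norm_sq_add_integral_norm_fderiv_sq hf v e hT) hwv
  linarith [mul_le_mul_of_nonneg_left hpath hT]

end Line

section Translation

variable {α E : Type*} [MeasurableSpace α] [AddGroup E] [MeasurableSpace E] [MeasurableAdd₂ E]
  {μ : Measure E} [μ.IsAddRightInvariant]

theorem setIntegral_comp_add_right_le {G : E → ℝ} {S A : Set E} {a : E} (hSA : ∀ v ∈ S, v + a ∈ A)
    (hG : Integrable G μ) (hG_nonneg : ∀ v, 0 ≤ G v) :
    ∫ v in S, G (v + a) ∂μ ≤ ∫ v in A, G v ∂μ := by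
  rw [← (measurePreserving_add_right μ a).setIntegral_preimage_emb
    (measurableEmbedding_addRight a) G A]
  exact setIntegral_mono_set (hG.comp_add_right a).integrableOn (.of_forall fun v => hG_nonneg _)
    (LE.le.eventuallyLE hSA)

variable [SFinite μ] {ν : Measure α} {g : α → E}

theorem measurePreserving_prod_add_comp [SFinite ν] (hg : Measurable g) :
    MeasurePreserving (fun p : α × E => (p.1, p.2 + g p.1)) (ν.prod μ) (ν.prod μ) :=
  (MeasurePreserving.id ν).skew_product (g := fun a v => v + g a) (by fun_prop)
    (.of_forall fun a => (measurePreserving_add_right μ (g a)).map_eq)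

variable [IsFiniteMeasure ν] {F : Type*} [NormedAddCommGroup F] {G : E → F}

theorem integrable_prod_comp_add (hg : Measurable g) (hG : Integrable G μ) :
    Integrable (fun p : α × E => G (p.2 + g p.1)) (ν.prod μ) :=
  (measurePreserving_prod_add_comp hg).integrable_comp_of_integrable (hG.comp_snd ν)

theorem integral_integral_comp_add [NormedSpace ℝ F] [CompleteSpace F] (hg : Measurable g)
    (hG : Integrable G μ) :
    ∫ v, ∫ a, G (v + g a) ∂ν ∂μ = ν.real Set.univ • ∫ v, G v ∂μ := by
  rw [integral_integral_swap (f := fun v a => G (v + g a)) (integrable_prod_comp_add hg hG).swap]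
  simp only [integral_add_right_eq_self G, integral_const]

end Translation

section WeightedPoincare

variable {E F : Type*} [NormedAddCommGroup E] [MeasurableSpace E] [BorelSpace E]
  [NormedAddCommGroup F] {μ : Measure E}

theorem integrable_mul_norm_sq [IsFiniteMeasureOnCompacts μ] {w : E → ℝ} {f : E → F}
    (hw : Continuous w) (hf : Continuous f) (hf_supp : HasCompactSupport f) :
    Integrable (fun v => w v * ‖f v‖ ^ 2) μ :=
  Continuous.integrable_of_hasCompactSupport (by fun_prop)
    (hf_supp.mono' (subset_closure.trans' fun v hv h => hv (by simp [h])))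

variable [NormedSpace ℝ E] [NormedSpace ℝ F]

theorem integral_mul_norm_fderiv_apply_sq_le [IsFiniteMeasureOnCompacts μ] {f : E → F}
    (hf : ContDiff ℝ 1 f) (hf_supp : HasCompactSupport f) {w : E → ℝ} (hw : Continuous w)
    (hw_nonneg : ∀ v, 0 ≤ w v) {e : E} (he : ‖e‖ ≤ 1) :
    ∫ v, w v * ‖fderiv ℝ f v e‖ ^ 2 ∂μ ≤ ∫ v, w v * ‖fderiv ℝ f v‖ ^ 2 ∂μ := by
  have hf' := hf.continuous_fderiv one_ne_zero
  exact integral_mono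
    (integrable_mul_norm_sq hw (hf'.clm_apply continuous_const) (hf_supp.fderiv_apply ℝ e))
    (integrable_mul_norm_sq hw hf' (hf_supp.fderiv ℝ)) fun v =>
      mul_le_mul_of_nonneg_left
        (pow_le_pow_left₀ (norm_nonneg _) ((fderiv ℝ f v).unit_le_opNorm e he) 2) (hw_nonneg v)

variable [FiniteDimensional ℝ E] [μ.IsAddHaarMeasure]

theorem setIntegral_mul_norm_sq_le_of_le_mul_along_segment {f : E → F} (hf : ContDiff ℝ 1 f)
    (hf_supp : HasCompactSupport f) {w : E → ℝ} (hw : Continuous w) (hw_nonneg : ∀ v, 0 ≤ w v)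
    {S A : Set E} (hS : MeasurableSet S) {e : E} {K T : ℝ} (hK : 0 ≤ K) (hT : 0 ≤ T)
    (hwK : ∀ v ∈ S, ∀ t ∈ Set.Icc 0 T, w v ≤ K * w (v + t • e))
    (hSA : ∀ v ∈ S, v + T • e ∈ A) :
    ∫ v in S, w v * ‖f v‖ ^ 2 ∂μ ≤
      2 * K * (∫ v in A, w v * ‖f v‖ ^ 2 ∂μ + T ^ 2 * ∫ v, w v * ‖fderiv ℝ f v e‖ ^ 2 ∂μ) := by
  set N : E → ℝ := fun v => w v * ‖f v‖ ^ 2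
  set G : E → ℝ := fun v => w v * ‖fderiv ℝ f v e‖ ^ 2
  have hN : Integrable N μ := integrable_mul_norm_sq hw hf.continuous hf_supp
  have hN_nonneg (v : E) : 0 ≤ N v := mul_nonneg (hw_nonneg v) (sq_nonneg _)
  have hG : Integrable G μ := integrable_mul_norm_sq hw
    ((hf.continuous_fderiv one_ne_zero).clm_apply continuous_const) (hf_supp.fderiv_apply ℝ e)
  have hG_nonneg (v : E) : 0 ≤ G v := mul_nonneg (hw_nonneg v) (sq_nonneg _)
  have hline : Measurable fun t : ℝ => t • e := by fun_prop
  have hpath : Integrable (fun v => ∫ t in (0 : ℝ)..T, G (v + t • e)) μ := by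
    simpa only [intervalIntegral.integral_of_le hT] using
      (integrable_prod_comp_add hline hG).integral_prod_right
  have hfubini : ∫ v, (∫ t in (0 : ℝ)..T, G (v + t • e)) ∂μ = T * ∫ v, G v ∂μ := by
    simpa [intervalIntegral.integral_of_le hT, hT] using
      integral_integral_comp_add (ν := volume.restrict (Set.Ioc 0 T)) hline hG
  have hend : Integrable (fun v => N (v + T • e)) μ := hN.comp_add_right _
  calc ∫ v in S, N v ∂μ
    _ ≤ ∫ v in S, 2 * K * (N (v + T • e) + T * ∫ t in (0 : ℝ)..T, G (v + t • e)) ∂μ :=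
        setIntegral_mono_on hN.integrableOn
          ((hend.add (hpath.const_mul T)).const_mul (2 * K)).integrableOn hS fun v hv =>
            mul_norm_sq_le_of_le_mul_along_segment hf hw (hw_nonneg v) hT (hwK v hv)
    _ = 2 * K * (∫ v in S, N (v + T • e) ∂μ +
          T * ∫ v in S, (∫ t in (0 : ℝ)..T, G (v + t • e)) ∂μ) := by
        rw [integral_const_mul, integral_add hend.integrableOn (hpath.const_mul T).integrableOn,
          integral_const_mul]
    _ ≤ 2 * K * (∫ v in A, N v ∂μ + T * ∫ v, (∫ t in (0 : ℝ)..T, G (v + t • e)) ∂μ) := by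
        gcongr 2 * K * (?_ + T * ?_)
        · exact setIntegral_comp_add_right_le hSA hN hN_nonneg
        · exact setIntegral_le_integral hpath (.of_forall fun v =>
            intervalIntegral.integral_nonneg hT fun t _ => hG_nonneg _)
    _ = 2 * K * (∫ v in A, N v ∂μ + T ^ 2 * ∫ v, G v ∂μ) := by
        rw [hfubini, ← mul_assoc, sq]

end WeightedPoincare

section Bracket

theorem rpow_le_rpow_abs_mul_rpow {x y a : ℝ} (hx : 0 < x) (hy : 0 < y) (hxy : x ≤ a * y)
    (hyx : y ≤ a * x) (s : ℝ) : x ^ s ≤ a ^ |s| * y ^ s := by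
  have ha : 0 < a := pos_of_mul_pos_left (hx.trans_le hxy) hy.le
  rcases le_or_gt 0 s with hs | hs
  · rw [abs_of_nonneg hs, ← mul_rpow ha.le hy.le]
    exact rpow_le_rpow hx.le hxy hs
  · rw [abs_of_neg hs, rpow_neg ha.le, ← div_eq_inv_mul, le_div_iff₀' (by positivity),
      ← mul_rpow ha.le hx.le]
    exact rpow_le_rpow_of_nonpos hy hyx hs.le

variable {E : Type*} [NormedAddCommGroup E]

theorem sqrt_one_add_norm_sq_le_mul {v w : E} {a : ℝ} (ha : 1 ≤ a) (h : ‖v‖ ≤ a * ‖w‖) :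
    √(1 + ‖v‖ ^ 2) ≤ a * √(1 + ‖w‖ ^ 2) := by
  refine sqrt_le_iff.2 ⟨by positivity, ?_⟩
  rw [mul_pow, sq_sqrt (by positivity)]
  calc 1 + ‖v‖ ^ 2 ≤ a ^ 2 + (a * ‖w‖) ^ 2 := by
        gcongr
        exact one_le_pow₀ ha
    _ = a ^ 2 * (1 + ‖w‖ ^ 2) := by ring

theorem le_mul_of_sqrt_one_add_norm_sq_rpow_bounds {M : E → ℝ} {C₁ C₂ s : ℝ} (hC₁ : 0 < C₁)
    (hM : ∀ v, C₁ * √(1 + ‖v‖ ^ 2) ^ s ≤ M v ∧ M v ≤ C₂ * √(1 + ‖v‖ ^ 2) ^ s)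
    {v w : E} {a : ℝ} (ha : 1 ≤ a) (hvw : ‖v‖ ≤ a * ‖w‖) (hwv : ‖w‖ ≤ a * ‖v‖) :
    M v ≤ C₂ / C₁ * a ^ |s| * M w := by
  have hbracket (u : E) : 0 < √(1 + ‖u‖ ^ 2) := by positivity
  have hC₂ : 0 < C₂ := hC₁.trans_le <|
    le_of_mul_le_mul_right ((hM v).1.trans (hM v).2) (rpow_pos_of_pos (hbracket v) s)
  calc M v ≤ C₂ * √(1 + ‖v‖ ^ 2) ^ s := (hM v).2
    _ ≤ C₂ * (a ^ |s| * √(1 + ‖w‖ ^ 2) ^ s) := by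
        gcongr
        exact rpow_le_rpow_abs_mul_rpow (hbracket v) (hbracket w)
          (sqrt_one_add_norm_sq_le_mul ha hvw) (sqrt_one_add_norm_sq_le_mul ha hwv) s
    _ = C₂ / C₁ * a ^ |s| * (C₁ * √(1 + ‖w‖ ^ 2) ^ s) := by field_simp
    _ ≤ C₂ / C₁ * a ^ |s| * M w := by
        gcongr
        exact (hM w).1

end Bracket

section Regions

open scoped RealInnerProductSpace

variable {E : Type*} [NormedAddCommGroup E] [InnerProductSpace ℝ E]

/-- The region `C_η` of small `v₁` and large `v'`, with `v₁ = ⟪e, v⟫` for a unit vector `e`,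
`|v'| = √(‖v‖² - v₁²)` and `r` in place of `η ^ (-1/3)`. -/
def thinRegion (e : E) (r : ℝ) : Set E :=
  {v | |⟪e, v⟫| ≤ r ∧ r ≤ √(‖v‖ ^ 2 - ⟪e, v⟫ ^ 2)}

/-- The region `A_η^c` of large `v₁ = ⟪e, v⟫`, with `r` in place of `η ^ (-1/3)`. -/
def outerRegion (e : E) (r : ℝ) : Set E :=
  {v | r ≤ |⟪e, v⟫|}

theorem isClosed_thinRegion (e : E) (r : ℝ) : IsClosed (thinRegion e r) := by
  have hinner : IsClosed {v : E | |⟪e, v⟫| ≤ r} := isClosed_le (by fun_prop) (by fun_prop)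
  have htransverse : IsClosed {v : E | r ≤ √(‖v‖ ^ 2 - ⟪e, v⟫ ^ 2)} :=
    isClosed_le (by fun_prop) (by fun_prop)
  exact hinner.inter htransverse

theorem isClosed_outerRegion (e : E) (r : ℝ) : IsClosed (outerRegion e r) :=
  isClosed_le (by fun_prop) (by fun_prop)

variable {e v : E} {r t : ℝ}

theorem inner_add_smul_self_of_norm_eq_one (he : ‖e‖ = 1) : ⟪e, v + t • e⟫ = ⟪e, v⟫ + t := by
  simp [inner_add_right, inner_smul_right, he]

theorem norm_add_smul_sq_sub_inner_sq (he : ‖e‖ = 1) :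
    ‖v + t • e‖ ^ 2 - ⟪e, v + t • e⟫ ^ 2 = ‖v‖ ^ 2 - ⟪e, v⟫ ^ 2 := by
  rw [inner_add_smul_self_of_norm_eq_one he, norm_add_sq_real, inner_smul_right,
    real_inner_comm, norm_smul, he, mul_one, norm_eq_abs, sq_abs]
  ring

theorem sq_le_norm_sq_sub_inner_sq (hr : 0 < r) (hv : v ∈ thinRegion e r) :
    r ^ 2 ≤ ‖v‖ ^ 2 - ⟪e, v⟫ ^ 2 :=
  (le_sqrt' hr).1 hv.2

theorem add_two_mul_smul_mem_outerRegion (he : ‖e‖ = 1) (hv : v ∈ thinRegion e r) :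
    v + (2 * r) • e ∈ outerRegion e r := by
  rw [outerRegion, Set.mem_ofPred_eq, inner_add_smul_self_of_norm_eq_one he]
  linarith [neg_le_of_abs_le hv.1, le_abs_self (⟪e, v⟫ + 2 * r)]

theorem norm_add_smul_le_three_mul_norm (he : ‖e‖ = 1) (hr : 0 < r) (hv : v ∈ thinRegion e r)
    (ht : t ∈ Set.Icc 0 (2 * r)) : ‖v + t • e‖ ≤ 3 * ‖v‖ := by
  have hrv : r ≤ ‖v‖ := le_of_sq_le_sq
    ((sq_le_norm_sq_sub_inner_sq hr hv).trans (sub_le_self _ (sq_nonneg _))) (norm_nonneg v)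
  calc ‖v + t • e‖ ≤ ‖v‖ + ‖t • e‖ := norm_add_le _ _
    _ = ‖v‖ + t := by rw [norm_smul, he, mul_one, norm_of_nonneg ht.1]
    _ ≤ 3 * ‖v‖ := by linarith [ht.2]

theorem norm_le_three_mul_norm_add_smul (he : ‖e‖ = 1) (hr : 0 < r) (hv : v ∈ thinRegion e r) :
    ‖v‖ ≤ 3 * ‖v + t • e‖ := by
  have htransverse := sq_le_norm_sq_sub_inner_sq hr hv
  have hinner : ⟪e, v⟫ ^ 2 ≤ r ^ 2 := sq_le_sq' (neg_le_of_abs_le hv.1) (le_of_abs_le hv.1)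
  refine le_of_sq_le_sq ?_ (by positivity)
  calc ‖v‖ ^ 2 ≤ 2 * (‖v‖ ^ 2 - ⟪e, v⟫ ^ 2) := by linarith
    _ = 2 * (‖v + t • e‖ ^ 2 - ⟪e, v + t • e⟫ ^ 2) := by rw [norm_add_smul_sq_sub_inner_sq he]
    _ ≤ (3 * ‖v + t • e‖) ^ 2 := by
      linarith [sq_nonneg ⟪e, v + t • e⟫, sq_nonneg ‖v + t • e‖]

end Regions

section Main

open scoped RealInnerProductSpace

variable {E F : Type*} [NormedAddCommGroup E] [InnerProductSpace ℝ E]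
  [MeasurableSpace E] [BorelSpace E] [NormedAddCommGroup F] {μ : Measure E} {e : E} {ψ : E → F}

theorem setIntegral_outerRegion_norm_sq_le [IsFiniteMeasureOnCompacts μ] {r : ℝ} (hr : 0 < r)
    (hψ : Continuous ψ) (hψ_supp : HasCompactSupport ψ) :
    ∫ v in outerRegion e r, ‖ψ v‖ ^ 2 ∂μ ≤
      r⁻¹ * ∫ v in outerRegion e r, |⟪e, v⟫| * ‖ψ v‖ ^ 2 ∂μ := by
  have hint {w : E → ℝ} (hw : Continuous w) :
      IntegrableOn (fun v => w v * ‖ψ v‖ ^ 2) (outerRegion e r) μ :=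
    (integrable_mul_norm_sq hw hψ hψ_supp).integrableOn
  rw [← integral_const_mul]
  refine setIntegral_mono_on (by simpa using hint continuous_one)
    ((hint (by fun_prop)).const_mul _) (isClosed_outerRegion e r).measurableSet fun v hv => ?_
  rw [← mul_assoc]
  exact le_mul_of_one_le_left (by positivity) ((one_le_inv_mul₀ hr).2 hv)

variable [FiniteDimensional ℝ E] [NormedSpace ℝ F] [μ.IsAddHaarMeasure] {M : E → ℝ}

theorem setIntegral_thinRegion_norm_sq_le (he : ‖e‖ = 1) {r K : ℝ} (hr : 0 < r)
    (hM_pos : ∀ v, 0 < M v) (hM : ContDiff ℝ 1 M)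
    (hMK : ∀ v w, ‖v‖ ≤ 3 * ‖w‖ → ‖w‖ ≤ 3 * ‖v‖ → M v ≤ K * M w)
    (hψ : ContDiff ℝ 1 ψ) (hψ_supp : HasCompactSupport ψ) :
    ∫ v in thinRegion e r, ‖ψ v‖ ^ 2 ∂μ ≤
      8 * K ^ 2 * (r ^ 2 * ∫ v, ‖fderiv ℝ (fun w => (M w)⁻¹ • ψ w) v‖ ^ 2 * M v ^ 2 ∂μ +
        r⁻¹ * ∫ v in outerRegion e r, |⟪e, v⟫| * ‖ψ v‖ ^ 2 ∂μ) := by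
  set f : E → F := fun w => (M w)⁻¹ • ψ w
  have hf : ContDiff ℝ 1 f := (hM.inv fun v => (hM_pos v).ne').smul hψ
  have hf_supp : HasCompactSupport f := hψ_supp.smul_left
  have hM_sq : Continuous fun v => M v ^ 2 := hM.continuous.pow 2
  have hfψ (v : E) : M v ^ 2 * ‖f v‖ ^ 2 = ‖ψ v‖ ^ 2 := by
    rw [← mul_pow, norm_smul, norm_inv, norm_of_nonneg (hM_pos v).le,
      mul_inv_cancel_left₀ (hM_pos v).ne']
  have hgradient : ∫ v, M v ^ 2 * ‖fderiv ℝ f v e‖ ^ 2 ∂μ ≤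
      ∫ v, ‖fderiv ℝ f v‖ ^ 2 * M v ^ 2 ∂μ := by
    simpa only [mul_comm (M _ ^ 2)] using
      integral_mul_norm_fderiv_apply_sq_le hf hf_supp hM_sq (fun v => sq_nonneg (M v)) he.le
  have houter_nonneg : 0 ≤ r⁻¹ * ∫ v in outerRegion e r, |⟪e, v⟫| * ‖ψ v‖ ^ 2 ∂μ := by positivity
  calc ∫ v in thinRegion e r, ‖ψ v‖ ^ 2 ∂μ
    _ = ∫ v in thinRegion e r, M v ^ 2 * ‖f v‖ ^ 2 ∂μ := by simp only [hfψ]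
    _ ≤ 2 * K ^ 2 * (∫ v in outerRegion e r, M v ^ 2 * ‖f v‖ ^ 2 ∂μ +
          (2 * r) ^ 2 * ∫ v, M v ^ 2 * ‖fderiv ℝ f v e‖ ^ 2 ∂μ) := by
        refine setIntegral_mul_norm_sq_le_of_le_mul_along_segment hf hf_supp hM_sq
          (fun v => sq_nonneg _) (isClosed_thinRegion e r).measurableSet (sq_nonneg K)
          (by positivity) (fun v hv t ht => ?_) fun v hv => add_two_mul_smul_mem_outerRegion he hv
        rw [← mul_pow]
        exact pow_le_pow_left₀ (hM_pos v).le (hMK _ _ (norm_le_three_mul_norm_add_smul he hr hv)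
          (norm_add_smul_le_three_mul_norm he hr hv ht)) 2
    _ ≤ 2 * K ^ 2 * (r⁻¹ * ∫ v in outerRegion e r, |⟪e, v⟫| * ‖ψ v‖ ^ 2 ∂μ +
          (2 * r) ^ 2 * ∫ v, ‖fderiv ℝ f v‖ ^ 2 * M v ^ 2 ∂μ) := by
        simp only [hfψ]
        gcongr
        exact setIntegral_outerRegion_norm_sq_le hr hψ.continuous hψ_supp
    _ ≤ _ := by linarith [mul_nonneg (sq_nonneg K) houter_nonneg]

theorem poincare_small_v1_large_v'_general (μ : Measure E) [μ.IsAddHaarMeasure] (he : ‖e‖ = 1)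
    {s C₁ C₂ : ℝ} (hC₁ : 0 < C₁) (hM : ContDiff ℝ 1 M)
    (hM_bounds : ∀ v, C₁ * √(1 + ‖v‖ ^ 2) ^ s ≤ M v ∧ M v ≤ C₂ * √(1 + ‖v‖ ^ 2) ^ s) :
    ∃ C : ℝ, 0 < C ∧ ∀ η : ℝ, 0 < η → ∀ ψ : E → F, ContDiff ℝ 1 ψ → HasCompactSupport ψ →
      ∫ v in thinRegion e (η ^ (-(1 : ℝ) / 3)), ‖ψ v‖ ^ 2 ∂μ ≤
        C * η ^ (-(2 : ℝ) / 3) *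
          (∫ v, ‖fderiv ℝ (fun w => (M w)⁻¹ • ψ w) v‖ ^ 2 * M v ^ 2 ∂μ +
            η * ∫ v in outerRegion e (η ^ (-(1 : ℝ) / 3)), |⟪e, v⟫| * ‖ψ v‖ ^ 2 ∂μ) := by
  have hM_pos (v : E) : 0 < M v := lt_of_lt_of_le (by positivity) (hM_bounds v).1
  have hMK (v w : E) (hvw : ‖v‖ ≤ 3 * ‖w‖) (hwv : ‖w‖ ≤ 3 * ‖v‖) :=
    le_mul_of_sqrt_one_add_norm_sq_rpow_bounds hC₁ hM_bounds (by norm_num) hvw hwv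
  have hK : 0 < C₂ / C₁ * 3 ^ |s| :=
    pos_of_mul_pos_left ((hM_pos 0).trans_le (hMK 0 0 (by simp) (by simp))) (hM_pos 0).le
  refine ⟨8 * (C₂ / C₁ * 3 ^ |s|) ^ 2, by positivity, fun η hη ψ hψ hψ_supp => ?_⟩
  have hr_sq : (η ^ (-(1 : ℝ) / 3)) ^ 2 = η ^ (-(2 : ℝ) / 3) := by
    rw [← rpow_mul_natCast hη.le]
    norm_num
  have hr_inv : (η ^ (-(1 : ℝ) / 3))⁻¹ = η ^ (-(2 : ℝ) / 3) * η := by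
    rw [← rpow_neg hη.le, ← rpow_add_one hη.ne']
    norm_num
  refine (setIntegral_thinRegion_norm_sq_le he (by positivity) hM_pos hM hMK hψ
    hψ_supp).trans_eq ?_
  rw [hr_sq, hr_inv]
  ring

end Main

/-- **Poincaré-type inequality on the region of small `v₁` and large `v'`**
(Lemma 2.6 of the paper). -/
theorem poincare_small_v1_large_v' (d : ℕ) (hd : 2 ≤ d) (γ C₁ C₂ : ℝ)
    (hγ₁ : (d : ℝ) / 2 < γ) (hγ₂ : γ < ((d : ℝ) + 4) / 2)
    (hC₁ : 0 < C₁) (hC₁₂ : C₁ ≤ C₂)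
    (M : EuclideanSpace ℝ (Fin d) → ℝ) (hMpos : ∀ v, 0 < M v) (hM : ContDiff ℝ 1 M)
    (hA1 : ∀ v, C₁ * Real.sqrt (1 + ‖v‖ ^ 2) ^ (-γ) ≤ M v ∧
              M v ≤ C₂ * Real.sqrt (1 + ‖v‖ ^ 2) ^ (-γ)) :
    ∃ C : ℝ, 0 < C ∧
      ∀ η : ℝ, 0 < η →
        ∀ ψ : EuclideanSpace ℝ (Fin d) → ℂ, ContDiff ℝ (⊤ : ℕ∞) ψ → HasCompactSupport ψ →
          (∫ v in {v : EuclideanSpace ℝ (Fin d) |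
              |v (⟨0, by omega⟩ : Fin d)| ≤ η ^ (-(1 : ℝ) / 3) ∧
              η ^ (-(1 : ℝ) / 3) ≤ Real.sqrt (‖v‖ ^ 2 - (v (⟨0, by omega⟩ : Fin d)) ^ 2)},
              ‖ψ v‖ ^ 2) ≤
            C * η ^ (-(2 : ℝ) / 3) *
              ((∫ v, ‖fderiv ℝ (fun w => ψ w / (M w : ℂ)) v‖ ^ 2 * (M v) ^ 2) +
                η * ∫ v in {v : EuclideanSpace ℝ (Fin d) |
                    η ^ (-(1 : ℝ) / 3) ≤ |v (⟨0, by omega⟩ : Fin d)|},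
                    |v (⟨0, by omega⟩ : Fin d)| * ‖ψ v‖ ^ 2) := by
  obtain ⟨C, hC, h⟩ := poincare_small_v1_large_v'_general volume (F := ℂ)
    (e := EuclideanSpace.single (⟨0, by omega⟩ : Fin d) (1 : ℝ)) (by simp) hC₁ hM hA1
  exact ⟨C, hC, fun η hη ψ hψ hψ_supp => by simpa [thinRegion, outerRegion, div_eq_inv_mul,
    EuclideanSpace.inner_single_left] using h η hη ψ (hψ.of_le (by simp)) hψ_supp⟩
end

section
/- For every λ₀ > 0 there exists a constant C > 0, independent of λ and η, such that for all η > 0, all λ ∈ ℂ with |λ| ≤ λ₀, and all smooth compactly supported ψ, φ : ℝ^d → ℂ, one has |a(ψ,φ)| ≤ C ‖ψ‖_{H_η} ‖φ‖_{H_η}. -/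
open MeasureTheory Real

noncomputable section

/-- The sesquilinear form `a(ψ,φ)` of the paper:
`a(ψ,φ) = ∫ ∇(ψ/M)·∇(φ̄/M) M² + ∫ V ψ φ̄ + iη ∫ v₁ ψ φ̄ − λη^{2/3} ∫ ψ φ̄`,
with `V(v) = ⟨v⟩^{-σ}`. -/
def aForm {d : ℕ} (h0 : 0 < d) (M : EuclideanSpace ℝ (Fin d) → ℝ) (σ η : ℝ) (l : ℂ)
    (ψ φ : EuclideanSpace ℝ (Fin d) → ℂ) : ℂ :=
  (∫ v, (∑ i : Fin d,
      fderiv ℝ (fun w => ψ w / (M w : ℂ)) v (EuclideanSpace.single i (1 : ℝ)) *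
        fderiv ℝ (fun w => starRingEnd ℂ (φ w) / (M w : ℂ)) v (EuclideanSpace.single i (1 : ℝ)))
      * ((M v : ℂ)) ^ 2)
  + (∫ v, ((Real.sqrt (1 + ‖v‖ ^ 2) ^ (-σ) : ℝ) : ℂ) * (ψ v * starRingEnd ℂ (φ v)))
  + Complex.I * (η : ℂ) * (∫ v, ((v (⟨0, h0⟩ : Fin d) : ℝ) : ℂ) * (ψ v * starRingEnd ℂ (φ v)))
  - l * ((η ^ ((2 : ℝ) / 3) : ℝ) : ℂ) * ∫ v, ψ v * starRingEnd ℂ (φ v)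

/-- The squared norm `‖ψ‖²_{H_η}`. -/
def HnormSq {d : ℕ} (h0 : 0 < d) (M : EuclideanSpace ℝ (Fin d) → ℝ) (η : ℝ)
    (ψ : EuclideanSpace ℝ (Fin d) → ℂ) : ℝ :=
  (∫ v, ‖fderiv ℝ (fun w => ψ w / (M w : ℂ)) v‖ ^ 2 * (M v) ^ 2)
  + (∫ v, ‖ψ v‖ ^ 2 / (1 + ‖v‖ ^ 2))
  + η * ∫ v, |v (⟨0, h0⟩ : Fin d)| * ‖ψ v‖ ^ 2

/-!
Only the term `λ η^{2/3} ∫ ψ φ̄` is not immediately bounded by the Cauchy–Schwarz inequality: it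
requires the interpolation inequality `η^{2/3} ‖ψ‖²_{L²} ≤ K ‖ψ‖²_{H_η}`. Put `ρ = ⟨v⟩^{-2γ}`,
which is comparable to `M²`, `g = ψ / M` and `s = η^{1/3}`. Since `w(v) = s sin (s v₁)` satisfies
`∂₁w - 2w² ≥ s² - 3 s³ |v₁|`, integrating the total derivative `∂₁(w ρ |g|²)` and absorbing the
cross terms by Young's inequality yields
`s² ∫ ρ |g|² ≤ ∫ ρ (|∂₁g|² + γ² ⟨v⟩⁻² |g|² + 3 s³ |v₁| |g|²)`, and `s³ = η`.
-/

section CauchySchwarz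

variable {α G : Type*} [MeasurableSpace α] {μ : Measure α} [NormedAddCommGroup G]
  [NormedSpace ℝ G]

lemma norm_integral_le_sqrt_mul_sqrt {f : α → G} {A B : α → ℝ} (hA : Integrable A μ)
    (hB : Integrable B μ) (hA₀ : ∀ x, 0 ≤ A x) (hB₀ : ∀ x, 0 ≤ B x)
    (hf : ∀ x, ‖f x‖ ^ 2 ≤ A x * B x) :
    ‖∫ x, f x ∂μ‖ ≤ √(∫ x, A x ∂μ) * √(∫ x, B x ∂μ) := by
  have memLp_sqrt {H : α → ℝ} (hH : Integrable H μ) (hH₀ : ∀ x, 0 ≤ H x) :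
      MemLp (fun x ↦ √(H x)) 2 μ := by
    refine (memLp_two_iff_integrable_sq
      (continuous_sqrt.comp_aestronglyMeasurable hH.aestronglyMeasurable)).2 ?_
    simpa only [sq_sqrt (hH₀ _)] using hH
  have hA₂ := memLp_sqrt hA hA₀
  have hB₂ := memLp_sqrt hB hB₀
  have hf' (x : α) : ‖f x‖ ≤ √(A x) * √(B x) := by
    rw [← sqrt_mul (hA₀ x)]
    exact le_sqrt_of_sq_le (hf x)
  calc ‖∫ x, f x ∂μ‖ ≤ ∫ x, √(A x) * √(B x) ∂μ :=
        norm_integral_le_of_norm_le (hA₂.integrable_mul hB₂) (.of_forall hf')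
    _ ≤ √(∫ x, A x ∂μ) * √(∫ x, B x ∂μ) := by
        have h := integral_mul_le_Lp_mul_Lq_of_nonneg HolderConjugate.two_two
          (.of_forall fun x ↦ sqrt_nonneg (A x)) (.of_forall fun x ↦ sqrt_nonneg (B x))
          (by simpa using hA₂) (by simpa using hB₂)
        simpa only [rpow_two, sq_sqrt (hA₀ _), sq_sqrt (hB₀ _), ← sqrt_eq_rpow] using h

lemma norm_integral_le_mul_sqrt_mul_sqrt {f : α → G} {A B : α → ℝ} {K X Y : ℝ} (hK : 0 ≤ K)
    (hA : Integrable A μ) (hB : Integrable B μ) (hA₀ : ∀ x, 0 ≤ A x) (hB₀ : ∀ x, 0 ≤ B x)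
    (hf : ∀ x, ‖f x‖ ^ 2 ≤ A x * B x) (hX : ∫ x, A x ∂μ ≤ K * X) (hY : ∫ x, B x ∂μ ≤ K * Y) :
    ‖∫ x, f x ∂μ‖ ≤ K * (√X * √Y) :=
  calc ‖∫ x, f x ∂μ‖ ≤ √(∫ x, A x ∂μ) * √(∫ x, B x ∂μ) :=
        norm_integral_le_sqrt_mul_sqrt hA hB hA₀ hB₀ hf
    _ ≤ √(K * X) * √(K * Y) := by gcongr
    _ = K * (√X * √Y) := by
        rw [sqrt_mul hK, sqrt_mul hK, mul_mul_mul_comm, mul_self_sqrt hK]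

end CauchySchwarz

lemma integral_mul_le_div_mul_integral_mul {α : Type*} [MeasurableSpace α] {μ : Measure α}
    {ρ m P Q : α → ℝ} {c C : ℝ} (hc : 0 < c) (hC : 0 ≤ C)
    (hcm : ∀ x, c * ρ x ≤ m x) (hmC : ∀ x, m x ≤ C * ρ x) (hP : ∀ x, 0 ≤ P x)
    (hQ : ∀ x, 0 ≤ Q x) (hmP : Integrable (fun x ↦ m x * P x) μ)
    (hρP : Integrable (fun x ↦ ρ x * P x) μ) (hρQ : Integrable (fun x ↦ ρ x * Q x) μ)
    (hmQ : Integrable (fun x ↦ m x * Q x) μ) (h : ∫ x, ρ x * P x ∂μ ≤ ∫ x, ρ x * Q x ∂μ) :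
    ∫ x, m x * P x ∂μ ≤ C / c * ∫ x, m x * Q x ∂μ :=
  calc ∫ x, m x * P x ∂μ ≤ ∫ x, C * (ρ x * P x) ∂μ :=
        integral_mono hmP (hρP.const_mul C) fun x ↦ by
          simpa only [mul_assoc] using mul_le_mul_of_nonneg_right (hmC x) (hP x)
    _ = C * ∫ x, ρ x * P x ∂μ := integral_const_mul C _
    _ ≤ C * ∫ x, ρ x * Q x ∂μ := by gcongr
    _ ≤ C * ∫ x, c⁻¹ * (m x * Q x) ∂μ := by
        gcongr ?_ * ?_
        refine integral_mono hρQ (hmQ.const_mul c⁻¹) fun x ↦ ?_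
        rw [le_inv_mul_iff₀ hc, ← mul_assoc]
        exact mul_le_mul_of_nonneg_right (hcm x) (hQ x)
    _ = C / c * ∫ x, m x * Q x ∂μ := by rw [integral_const_mul, div_eq_mul_inv, mul_assoc]

lemma integrable_mul_norm_sq_s5 {X G : Type*} [TopologicalSpace X] [MeasurableSpace X]
    [OpensMeasurableSpace X] {μ : Measure X} [IsFiniteMeasureOnCompacts μ]
    [NormedAddCommGroup G] {m : X → ℝ} {u : X → G} (hm : Continuous m) (hu : Continuous u)
    (hu_supp : HasCompactSupport u) : Integrable (fun x ↦ m x * ‖u x‖ ^ 2) μ := by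
  have hu_sq : HasCompactSupport fun x ↦ ‖u x‖ ^ 2 :=
    hu_supp.comp_left (g := fun z : G ↦ ‖z‖ ^ 2) (by simp)
  exact (hm.mul (hu.norm.pow 2)).integrable_of_hasCompactSupport hu_sq.mul_left

lemma integrable_mul_norm_sq_add_mul_norm_sq {X G H : Type*} [TopologicalSpace X]
    [MeasurableSpace X] [OpensMeasurableSpace X] {μ : Measure X} [IsFiniteMeasureOnCompacts μ]
    [NormedAddCommGroup G] [NormedAddCommGroup H] {m U : X → ℝ} {u : X → G} {g : X → H}
    (hm : Continuous m) (hU : Continuous U) (hu : Continuous u) (hu_supp : HasCompactSupport u)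
    (hg : Continuous g) (hg_supp : HasCompactSupport g) :
    Integrable (fun x ↦ m x * (‖u x‖ ^ 2 + U x * ‖g x‖ ^ 2)) μ := by
  have h := (integrable_mul_norm_sq_s5 (μ := μ) hm hu hu_supp).add
    (integrable_mul_norm_sq_s5 (hm.mul hU) hg hg_supp)
  exact h.congr (.of_forall fun x ↦ by simp only [Pi.add_apply, Pi.mul_apply]; ring)

lemma one_sub_cos_add_two_mul_sin_sq_le (x : ℝ) : 1 - cos x + 2 * sin x ^ 2 ≤ 3 * |x| := by
  have h_cos : 1 - cos x ≤ |x| := by simpa using (le_abs_self _).trans (abs_cos_sub_cos_le 0 x)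
  have h_sin : sin x ^ 2 ≤ |x| :=
    calc sin x ^ 2 = |sin x| * |sin x| := by rw [← sq_abs, sq]
      _ ≤ 1 * |x| := mul_le_mul (abs_sin_le_one x) abs_sin_le_abs (abs_nonneg _) zero_le_one
      _ = |x| := one_mul _
  linarith

section WeightedHardy

variable {E F : Type*} [NormedAddCommGroup E] [NormedSpace ℝ E] [NormedAddCommGroup F]

lemma continuous_fderiv_apply_const [NormedSpace ℝ F] {f : E → F} (hf : ContDiff ℝ 1 f) (e : E) :
    Continuous fun v ↦ fderiv ℝ f v e :=
  (hf.continuous_fderiv one_ne_zero).clm_apply continuous_const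

lemma integral_fderiv_apply_eq_zero [FiniteDimensional ℝ E] [MeasurableSpace E] [BorelSpace E]
    {μ : Measure E} [μ.IsAddHaarMeasure] [NormedSpace ℝ F] {f : E → F} (hf : ContDiff ℝ 1 f)
    (hf_supp : HasCompactSupport f) (e : E) : ∫ v, fderiv ℝ f v e ∂μ = 0 := by
  have hf' : Integrable (fun v ↦ fderiv ℝ f v e) μ :=
    (continuous_fderiv_apply_const hf e).integrable_of_hasCompactSupport (hf_supp.fderiv_apply ℝ e)
  simpa using integral_smul_fderiv_eq_neg_fderiv_smul_of_integrable (μ := μ) (𝕜 := ℝ)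
    (f := fun _ ↦ 1) (g := f) (v := e) (by simp) (by simpa using hf')
    (by simpa using hf.continuous.integrable_of_hasCompactSupport hf_supp)
    (fun _ _ ↦ differentiableAt_const _) (fun v _ ↦ hf.differentiable one_ne_zero v)

variable [InnerProductSpace ℝ F]

lemma fderiv_mul_mul_norm_sq_apply {w ρ : E → ℝ} {g : E → F} {v : E}
    (hw : DifferentiableAt ℝ w v) (hρ : DifferentiableAt ℝ ρ v) (hg : DifferentiableAt ℝ g v)
    (e : E) :
    fderiv ℝ (fun u ↦ w u * ρ u * ‖g u‖ ^ 2) v e =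
      (fderiv ℝ w v e * ρ v + w v * fderiv ℝ ρ v e) * ‖g v‖ ^ 2 +
        w v * ρ v * (2 * inner ℝ (g v) (fderiv ℝ g v e)) := by
  have h := (hw.hasFDerivAt.fun_mul hρ.hasFDerivAt).fun_mul hg.hasFDerivAt.norm_sq
  rw [h.fderiv]
  simp only [smul_add, add_apply, smul_apply, ContinuousLinearMap.comp_apply, coe_innerSL_apply,
    nsmul_eq_mul, Nat.cast_ofNat, smul_eq_mul]
  ring

lemma mul_mul_norm_sq_le_of_add_add_le {ρ ρ' a U V w w' : ℝ} (G D : F) (hρ : 0 < ρ)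
    (hρ' : ρ' ^ 2 ≤ 4 * V * ρ ^ 2) (hw : a + V + 2 * w ^ 2 ≤ w' + U) :
    ρ * (a * ‖G‖ ^ 2) ≤
      ((w' * ρ + w * ρ') * ‖G‖ ^ 2 + w * ρ * (2 * inner ℝ G D)) +
        ρ * (‖D‖ ^ 2 + U * ‖G‖ ^ 2) := by
  have hV : 0 ≤ V := by
    by_contra! hV
    nlinarith [sq_nonneg ρ', sq_pos_of_pos hρ]
  have young_weight : -(w * ρ') ≤ ρ * (w ^ 2 + V) := by
    refine (neg_le_abs _).trans (abs_le_of_sq_le_sq ?_ (by positivity))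
    calc (w * ρ') ^ 2 = w ^ 2 * ρ' ^ 2 := mul_pow ..
      _ ≤ w ^ 2 * (4 * V * ρ ^ 2) := by gcongr
      _ ≤ (ρ * (w ^ 2 + V)) ^ 2 := by nlinarith [sq_nonneg (ρ * (w ^ 2 - V))]
  have young_inner : -(w * (2 * inner ℝ G D)) ≤ w ^ 2 * ‖G‖ ^ 2 + ‖D‖ ^ 2 := by
    have h := norm_add_sq_real (w • G) D
    rw [norm_smul, mul_pow, norm_eq_abs, sq_abs, real_inner_smul_left] at h
    linarith [sq_nonneg ‖w • G + D‖]
  have h_weight := mul_le_mul_of_nonneg_right young_weight (sq_nonneg ‖G‖)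
  have h_field := mul_le_mul_of_nonneg_left hw (mul_nonneg hρ.le (sq_nonneg ‖G‖))
  have h_inner := mul_le_mul_of_nonneg_left young_inner hρ.le
  linarith

variable [FiniteDimensional ℝ E] [MeasurableSpace E] [BorelSpace E]
  {μ : Measure E} [μ.IsAddHaarMeasure] {ρ V : E → ℝ} {g : E → F} {e : E}

lemma integral_mul_mul_norm_sq_le_of_add_add_le {w a U : E → ℝ} (hw : ContDiff ℝ 1 w)
    (hρ : ContDiff ℝ 1 ρ) (hρ₀ : ∀ v, 0 < ρ v) (ha : Continuous a) (hU : Continuous U)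
    (hρV : ∀ v, fderiv ℝ ρ v e ^ 2 ≤ 4 * V v * ρ v ^ 2)
    (hwU : ∀ v, a v + V v + 2 * w v ^ 2 ≤ fderiv ℝ w v e + U v) (hg : ContDiff ℝ 1 g)
    (hg_supp : HasCompactSupport g) :
    ∫ v, ρ v * (a v * ‖g v‖ ^ 2) ∂μ ≤
      ∫ v, ρ v * (‖fderiv ℝ g v e‖ ^ 2 + U v * ‖g v‖ ^ 2) ∂μ := by
  have hF : ContDiff ℝ 1 fun v ↦ w v * ρ v * ‖g v‖ ^ 2 := (hw.mul hρ).mul (hg.norm_sq ℝ)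
  have hF_supp : HasCompactSupport fun v ↦ w v * ρ v * ‖g v‖ ^ 2 :=
    (hg_supp.comp_left (g := fun z : F ↦ ‖z‖ ^ 2) (by simp)).mul_left
  have hF_int : Integrable (fun v ↦ fderiv ℝ (fun u ↦ w u * ρ u * ‖g u‖ ^ 2) v e) μ :=
    (continuous_fderiv_apply_const hF e).integrable_of_hasCompactSupport
      (hF_supp.fderiv_apply ℝ e)
  have h_left : Integrable (fun v ↦ ρ v * (a v * ‖g v‖ ^ 2)) μ := by
    simpa only [Pi.mul_apply, mul_assoc] using
      integrable_mul_norm_sq_s5 (hρ.continuous.mul ha) hg.continuous hg_supp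
  have h_right : Integrable (fun v ↦ ρ v * (‖fderiv ℝ g v e‖ ^ 2 + U v * ‖g v‖ ^ 2)) μ :=
    integrable_mul_norm_sq_add_mul_norm_sq hρ.continuous hU (continuous_fderiv_apply_const hg e)
      (hg_supp.fderiv_apply ℝ e) hg.continuous hg_supp
  calc ∫ v, ρ v * (a v * ‖g v‖ ^ 2) ∂μ
      ≤ ∫ v, (fderiv ℝ (fun u ↦ w u * ρ u * ‖g u‖ ^ 2) v e +
          ρ v * (‖fderiv ℝ g v e‖ ^ 2 + U v * ‖g v‖ ^ 2)) ∂μ := by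
        refine integral_mono h_left (hF_int.add h_right) fun v ↦ ?_
        rw [fderiv_mul_mul_norm_sq_apply (hw.differentiable one_ne_zero v)
          (hρ.differentiable one_ne_zero v) (hg.differentiable one_ne_zero v)]
        exact mul_mul_norm_sq_le_of_add_add_le _ _ (hρ₀ v) (hρV v) (hwU v)
    _ = ∫ v, ρ v * (‖fderiv ℝ g v e‖ ^ 2 + U v * ‖g v‖ ^ 2) ∂μ := by
        rw [integral_add hF_int h_right, integral_fderiv_apply_eq_zero hF hF_supp, zero_add]

lemma integral_mul_sq_mul_norm_sq_le {ℓ : E →L[ℝ] ℝ} {s : ℝ} (hs : 0 ≤ s) (hℓ : ℓ e = 1)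
    (hρ : ContDiff ℝ 1 ρ) (hρ₀ : ∀ v, 0 < ρ v) (hV : Continuous V)
    (hρV : ∀ v, fderiv ℝ ρ v e ^ 2 ≤ 4 * V v * ρ v ^ 2) (hg : ContDiff ℝ 1 g)
    (hg_supp : HasCompactSupport g) :
    ∫ v, ρ v * (s ^ 2 * ‖g v‖ ^ 2) ∂μ ≤
      ∫ v, ρ v * (‖fderiv ℝ g v e‖ ^ 2 + (V v + 3 * s ^ 3 * |ℓ v|) * ‖g v‖ ^ 2) ∂μ := by
  have hw : ContDiff ℝ 1 fun v ↦ s * sin (s * ℓ v) := by fun_prop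
  have hw' (v : E) : fderiv ℝ (fun u ↦ s * sin (s * ℓ u)) v e = s ^ 2 * cos (s * ℓ v) := by
    have h := ((ℓ.hasFDerivAt (x := v)).const_mul s).sin.const_mul s
    rw [h.fderiv]
    simp only [smul_apply, hℓ, smul_eq_mul, mul_one]
    ring
  refine integral_mul_mul_norm_sq_le_of_add_add_le (V := V) hw hρ hρ₀ continuous_const
    (by fun_prop) hρV (fun v ↦ ?_) hg hg_supp
  rw [hw']
  have h := mul_le_mul_of_nonneg_left (one_sub_cos_add_two_mul_sin_sq_le (s * ℓ v)) (sq_nonneg s)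
  rw [abs_mul, abs_of_nonneg hs] at h
  linarith

end WeightedHardy

section JapaneseBracket

variable {E : Type*} [NormedAddCommGroup E] [InnerProductSpace ℝ E]

lemma contDiff_one_add_norm_sq_rpow {n : WithTop ℕ∞} (p : ℝ) :
    ContDiff ℝ n fun v : E ↦ (1 + ‖v‖ ^ 2) ^ p :=
  (contDiff_const.add (contDiff_norm_sq ℝ)).rpow_const_of_ne fun v ↦ by positivity

lemma fderiv_one_add_norm_sq_rpow_apply (p : ℝ) (v e : E) :
    fderiv ℝ (fun u : E ↦ (1 + ‖u‖ ^ 2) ^ p) v e =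
      2 * p * inner ℝ v e / (1 + ‖v‖ ^ 2) * (1 + ‖v‖ ^ 2) ^ p := by
  have hv : 1 + ‖v‖ ^ 2 ≠ 0 := by positivity
  have h := ((hasStrictFDerivAt_norm_sq v).hasFDerivAt.const_add 1).rpow_const (p := p) (.inl hv)
  rw [h.fderiv, rpow_sub_one hv]
  simp only [smul_apply, coe_innerSL_apply, nsmul_eq_mul, Nat.cast_ofNat, smul_eq_mul]
  ring

lemma fderiv_one_add_norm_sq_rpow_apply_sq_le (p : ℝ) (v : E) {e : E} (he : ‖e‖ ≤ 1) :
    fderiv ℝ (fun u : E ↦ (1 + ‖u‖ ^ 2) ^ p) v e ^ 2 ≤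
      4 * (p ^ 2 / (1 + ‖v‖ ^ 2)) * ((1 + ‖v‖ ^ 2) ^ p) ^ 2 := by
  have h_inner : inner ℝ v e ^ 2 ≤ 1 + ‖v‖ ^ 2 :=
    calc inner ℝ v e ^ 2 ≤ (‖v‖ * ‖e‖) ^ 2 := sq_le_sq' (by
          linarith [neg_abs_le (inner ℝ v e), abs_real_inner_le_norm v e]) (real_inner_le_norm v e)
      _ ≤ (‖v‖ * 1) ^ 2 := by gcongr
      _ ≤ 1 + ‖v‖ ^ 2 := by linarith
  rw [fderiv_one_add_norm_sq_rpow_apply, mul_pow]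
  gcongr
  calc (2 * p * inner ℝ v e / (1 + ‖v‖ ^ 2)) ^ 2
      = 4 * p ^ 2 / (1 + ‖v‖ ^ 2) ^ 2 * inner ℝ v e ^ 2 := by field_simp; ring
    _ ≤ 4 * p ^ 2 / (1 + ‖v‖ ^ 2) ^ 2 * (1 + ‖v‖ ^ 2) := by gcongr
    _ = 4 * (p ^ 2 / (1 + ‖v‖ ^ 2)) := by field_simp

lemma integral_mul_sq_mul_norm_sq_le_of_bracket_le [FiniteDimensional ℝ E] [MeasurableSpace E]
    [BorelSpace E] {μ : Measure E} [μ.IsAddHaarMeasure] {F : Type*} [NormedAddCommGroup F]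
    [InnerProductSpace ℝ F] {m : E → ℝ} {g : E → F} {e : E} {ℓ : E →L[ℝ] ℝ} {c C p s : ℝ}
    (hc : 0 < c) (hm : Continuous m) (hcm : ∀ v, c * (1 + ‖v‖ ^ 2) ^ p ≤ m v)
    (hmC : ∀ v, m v ≤ C * (1 + ‖v‖ ^ 2) ^ p) (hs : 0 ≤ s) (he : ‖e‖ ≤ 1) (hℓ : ℓ e = 1)
    (hg : ContDiff ℝ 1 g) (hg_supp : HasCompactSupport g) :
    ∫ v, m v * (s ^ 2 * ‖g v‖ ^ 2) ∂μ ≤ C / c * ∫ v, m v * (‖fderiv ℝ g v e‖ ^ 2 +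
      (p ^ 2 / (1 + ‖v‖ ^ 2) + 3 * s ^ 3 * |ℓ v|) * ‖g v‖ ^ 2) ∂μ := by
  have hC : 0 ≤ C := hc.le.trans (by simpa using (hcm 0).trans (hmC 0))
  have hρ : ContDiff ℝ 1 fun v : E ↦ (1 + ‖v‖ ^ 2) ^ p := contDiff_one_add_norm_sq_rpow p
  have hV : Continuous fun v : E ↦ p ^ 2 / (1 + ‖v‖ ^ 2) :=
    continuous_const.div (by fun_prop) fun v ↦ by positivity
  have h_left {k : E → ℝ} (hk : Continuous k) :
      Integrable (fun v ↦ k v * (s ^ 2 * ‖g v‖ ^ 2)) μ := by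
    simpa only [Pi.mul_apply, mul_assoc] using
      integrable_mul_norm_sq_s5 (hk.mul continuous_const) hg.continuous hg_supp
  have h_right {k : E → ℝ} (hk : Continuous k) :
      Integrable (fun v ↦ k v * (‖fderiv ℝ g v e‖ ^ 2 +
        (p ^ 2 / (1 + ‖v‖ ^ 2) + 3 * s ^ 3 * |ℓ v|) * ‖g v‖ ^ 2)) μ :=
    integrable_mul_norm_sq_add_mul_norm_sq hk (hV.add (by fun_prop))
      (continuous_fderiv_apply_const hg e) (hg_supp.fderiv_apply ℝ e) hg.continuous hg_supp
  exact integral_mul_le_div_mul_integral_mul hc hC hcm hmC (fun v ↦ by positivity)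
    (fun v ↦ by positivity) (h_left hm) (h_left hρ.continuous) (h_right hρ.continuous) (h_right hm)
    (integral_mul_sq_mul_norm_sq_le hs hℓ hρ (fun v ↦ by positivity) hV
      (fun v ↦ fderiv_one_add_norm_sq_rpow_apply_sq_le p v he) hg hg_supp)

lemma sqrt_rpow_sq {x : ℝ} (hx : 0 ≤ x) (p : ℝ) : (√x ^ p) ^ 2 = x ^ p := by
  rw [← rpow_div_two_eq_sqrt p hx, ← rpow_mul_natCast hx, Nat.cast_ofNat,
    div_mul_cancel₀ p two_ne_zero]

end JapaneseBracket

lemma contDiff_div_ofReal {E : Type*} [NormedAddCommGroup E] [NormedSpace ℝ E] {n : WithTop ℕ∞}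
    {m : E → ℝ} {f : E → ℂ} (hm : ContDiff ℝ n m) (hm₀ : ∀ v, m v ≠ 0) (hf : ContDiff ℝ n f) :
    ContDiff ℝ n fun v ↦ f v / (m v : ℂ) := by
  have hm_inv : ContDiff ℝ n fun v ↦ (m v : ℂ)⁻¹ :=
    (Complex.ofRealCLM.contDiff.comp hm).inv fun v ↦ Complex.ofReal_ne_zero.2 (hm₀ v)
  simpa only [div_eq_mul_inv] using hf.mul hm_inv

lemma hasCompactSupport_div_ofReal {X : Type*} [TopologicalSpace X] {f : X → ℂ}
    (hf : HasCompactSupport f) (m : X → ℝ) : HasCompactSupport fun v ↦ f v / (m v : ℂ) := by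
  simp only [div_eq_mul_inv]
  exact hf.mul_right

lemma sq_mul_norm_div_ofReal_sq {x : ℝ} (hx : x ≠ 0) (z : ℂ) :
    x ^ 2 * ‖z / (x : ℂ)‖ ^ 2 = ‖z‖ ^ 2 := by
  rw [norm_div, Complex.norm_real, norm_eq_abs, div_pow, sq_abs]
  field_simp

lemma norm_fderiv_conj {E : Type*} [NormedAddCommGroup E] [NormedSpace ℝ E] (f : E → ℂ) (v : E) :
    ‖fderiv ℝ (fun w ↦ starRingEnd ℂ (f w)) v‖ = ‖fderiv ℝ f v‖ := by
  have h : fderiv ℝ (fun w ↦ starRingEnd ℂ (f w)) v =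
      (Complex.conjLIE : ℂ →L[ℝ] ℂ) ∘L fderiv ℝ f v := Complex.conjLIE.comp_fderiv
  rw [h]
  exact Complex.conjLIE.toLinearIsometry.norm_toContinuousLinearMap_comp

lemma norm_sum_apply_mul_apply_le {ι E 𝕜 R : Type*} [NontriviallyNormedField 𝕜]
    [SeminormedAddCommGroup E] [NormedSpace 𝕜 E] [NonUnitalSeminormedRing R] [NormedSpace 𝕜 R]
    (t : Finset ι) {b : ι → E} (hb : ∀ i ∈ t, ‖b i‖ ≤ 1) (L L' : E →L[𝕜] R) :
    ‖∑ i ∈ t, L (b i) * L' (b i)‖ ≤ t.card * (‖L‖ * ‖L'‖) := by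
  rw [← nsmul_eq_mul]
  refine norm_sum_le_of_le t (fun i hi ↦ ?_) |>.trans_eq (Finset.sum_const _)
  exact (norm_mul_le _ _).trans (mul_le_mul (L.unit_le_opNorm _ (hb i hi))
    (L'.unit_le_opNorm _ (hb i hi)) (norm_nonneg _) (norm_nonneg _))

section Integrability

variable {E G : Type*} [NormedAddCommGroup E] [MeasurableSpace E] [OpensMeasurableSpace E]
  {μ : Measure E} [IsFiniteMeasureOnCompacts μ] [NormedAddCommGroup G]

lemma integrable_norm_sq_div_one_add_norm_sq {f : E → G} (hf : Continuous f)
    (hf_supp : HasCompactSupport f) : Integrable (fun v ↦ ‖f v‖ ^ 2 / (1 + ‖v‖ ^ 2)) μ := by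
  have h_weight : Continuous fun v : E ↦ (1 + ‖v‖ ^ 2)⁻¹ :=
    Continuous.inv₀ (by fun_prop) fun v ↦ by positivity
  simpa only [div_eq_inv_mul] using integrable_mul_norm_sq_s5 h_weight hf hf_supp

lemma integrable_norm_fderiv_div_sq_mul_sq [NormedSpace ℝ E] {m : E → ℝ} {f : E → ℂ}
    (hm : ContDiff ℝ 1 m) (hm₀ : ∀ v, m v ≠ 0) (hf : ContDiff ℝ 1 f)
    (hf_supp : HasCompactSupport f) :
    Integrable (fun v ↦ ‖fderiv ℝ (fun w ↦ f w / (m w : ℂ)) v‖ ^ 2 * m v ^ 2) μ := by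
  simpa only [Pi.pow_apply, mul_comm] using integrable_mul_norm_sq_s5 (μ := μ)
    (hm.continuous.pow 2) ((contDiff_div_ofReal hm hm₀ hf).continuous_fderiv one_ne_zero)
    ((hasCompactSupport_div_ofReal hf_supp m).fderiv ℝ)

lemma integrable_abs_apply_mul_norm_sq {ι : Type*} [Countable ι]
    {μ : Measure (EuclideanSpace ℝ ι)} [IsFiniteMeasureOnCompacts μ] {f : EuclideanSpace ℝ ι → G}
    (i : ι) (hf : Continuous f) (hf_supp : HasCompactSupport f) :
    Integrable (fun v ↦ |v i| * ‖f v‖ ^ 2) μ :=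
  integrable_mul_norm_sq_s5 (by fun_prop) hf hf_supp

end Integrability

section EnergyNorm

variable {d : ℕ} {h0 : 0 < d} {M : EuclideanSpace ℝ (Fin d) → ℝ} {η : ℝ}
  {ψ : EuclideanSpace ℝ (Fin d) → ℂ}

lemma integral_norm_fderiv_div_sq_mul_sq_le_HnormSq (hη : 0 ≤ η) :
    ∫ v, ‖fderiv ℝ (fun w ↦ ψ w / (M w : ℂ)) v‖ ^ 2 * M v ^ 2 ≤ HnormSq h0 M η ψ := by
  rw [HnormSq, add_assoc]
  exact le_add_of_nonneg_right (by positivity)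

lemma integral_norm_sq_div_le_HnormSq (hη : 0 ≤ η) :
    ∫ v, ‖ψ v‖ ^ 2 / (1 + ‖v‖ ^ 2) ≤ HnormSq h0 M η ψ := by
  rw [HnormSq, add_right_comm]
  exact le_add_of_nonneg_left (by positivity)

lemma mul_integral_abs_apply_mul_norm_sq_le_HnormSq :
    η * ∫ v, |v ⟨0, h0⟩| * ‖ψ v‖ ^ 2 ≤ HnormSq h0 M η ψ := by
  rw [HnormSq]
  exact le_add_of_nonneg_left (by positivity)

lemma HnormSq_eq_integral (hM : ContDiff ℝ 1 M) (hM₀ : ∀ v, M v ≠ 0) (hψ : ContDiff ℝ 1 ψ)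
    (hψ_supp : HasCompactSupport ψ) :
    HnormSq h0 M η ψ = ∫ v, M v ^ 2 * (‖fderiv ℝ (fun w ↦ ψ w / (M w : ℂ)) v‖ ^ 2 +
      ((1 + ‖v‖ ^ 2)⁻¹ + η * |v ⟨0, h0⟩|) * ‖ψ v / (M v : ℂ)‖ ^ 2) := by
  have h_grad := integrable_norm_fderiv_div_sq_mul_sq (μ := volume) hM hM₀ hψ hψ_supp
  have h_bracket := integrable_norm_sq_div_one_add_norm_sq (μ := volume) hψ.continuous hψ_supp
  have h_drift := (integrable_abs_apply_mul_norm_sq (μ := volume) ⟨0, h0⟩ hψ.continuous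
    hψ_supp).const_mul η
  rw [HnormSq, ← integral_const_mul, ← integral_add h_grad h_bracket,
    ← integral_add (h_grad.fun_add h_bracket) h_drift]
  congr 1 with v
  rw [← sq_mul_norm_div_ofReal_sq (hM₀ v) (ψ v)]
  ring

lemma integral_sq_mul_norm_fderiv_div_apply_sq_add_le_HnormSq {p : ℝ}
    {e : EuclideanSpace ℝ (Fin d)} (hη : 0 ≤ η) (he : ‖e‖ ≤ 1) (hM : ContDiff ℝ 1 M)
    (hM₀ : ∀ v, M v ≠ 0) (hψ : ContDiff ℝ 1 ψ) (hψ_supp : HasCompactSupport ψ) :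
    ∫ v, M v ^ 2 * (‖fderiv ℝ (fun w ↦ ψ w / (M w : ℂ)) v e‖ ^ 2 +
        (p ^ 2 / (1 + ‖v‖ ^ 2) + 3 * η * |v ⟨0, h0⟩|) * ‖ψ v / (M v : ℂ)‖ ^ 2) ≤
      (3 + p ^ 2) * HnormSq h0 M η ψ := by
  have hg := contDiff_div_ofReal hM hM₀ hψ
  have hg_supp := hasCompactSupport_div_ofReal hψ_supp M
  have hU : Continuous fun v : EuclideanSpace ℝ (Fin d) ↦
      (1 + ‖v‖ ^ 2)⁻¹ + η * |v ⟨0, h0⟩| :=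
    (Continuous.inv₀ (by fun_prop) fun v ↦ by positivity).add (by fun_prop)
  have h_int := integrable_mul_norm_sq_add_mul_norm_sq (μ := volume) (hM.continuous.pow 2) hU
    (hg.continuous_fderiv one_ne_zero) (hg_supp.fderiv ℝ) hg.continuous hg_supp
  rw [HnormSq_eq_integral hM hM₀ hψ hψ_supp, ← integral_const_mul]
  refine integral_mono_of_nonneg (.of_forall fun v ↦ by positivity) (h_int.const_mul _)
    (.of_forall fun v ↦ ?_)
  have h_apply : ‖fderiv ℝ (fun w ↦ ψ w / (M w : ℂ)) v e‖ ^ 2 ≤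
      (3 + p ^ 2) * ‖fderiv ℝ (fun w ↦ ψ w / (M w : ℂ)) v‖ ^ 2 :=
    (pow_le_pow_left₀ (norm_nonneg _) (ContinuousLinearMap.unit_le_opNorm _ e he) 2).trans
      (le_mul_of_one_le_left (sq_nonneg _) (by nlinarith))
  calc M v ^ 2 * (‖fderiv ℝ (fun w ↦ ψ w / (M w : ℂ)) v e‖ ^ 2 +
        (p ^ 2 / (1 + ‖v‖ ^ 2) + 3 * η * |v ⟨0, h0⟩|) * ‖ψ v / (M v : ℂ)‖ ^ 2)
      ≤ M v ^ 2 * ((3 + p ^ 2) * ‖fderiv ℝ (fun w ↦ ψ w / (M w : ℂ)) v‖ ^ 2 +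
        ((3 + p ^ 2) * (1 + ‖v‖ ^ 2)⁻¹ + (3 + p ^ 2) * (η * |v ⟨0, h0⟩|)) *
          ‖ψ v / (M v : ℂ)‖ ^ 2) := by
        rw [div_eq_mul_inv, mul_assoc 3]
        gcongr <;> linarith [sq_nonneg p]
    _ = (3 + p ^ 2) * (M v ^ 2 * (‖fderiv ℝ (fun w ↦ ψ w / (M w : ℂ)) v‖ ^ 2 +
        ((1 + ‖v‖ ^ 2)⁻¹ + η * |v ⟨0, h0⟩|) * ‖ψ v / (M v : ℂ)‖ ^ 2)) := by ring

lemma sq_mul_integral_norm_sq_le_HnormSq {γ C₁ C₂ s : ℝ} (hC₁ : 0 < C₁) (hs : 0 ≤ s)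
    (hM : ContDiff ℝ 1 M)
    (hA1 : ∀ v, C₁ * √(1 + ‖v‖ ^ 2) ^ (-γ) ≤ M v ∧ M v ≤ C₂ * √(1 + ‖v‖ ^ 2) ^ (-γ))
    (hψ : ContDiff ℝ 1 ψ) (hψ_supp : HasCompactSupport ψ) :
    s ^ 2 * ∫ v, ‖ψ v‖ ^ 2 ≤ C₂ ^ 2 / C₁ ^ 2 * (3 + γ ^ 2) * HnormSq h0 M (s ^ 3) ψ := by
  have hM₀ (v : EuclideanSpace ℝ (Fin d)) : 0 < M v :=
    lt_of_lt_of_le (by positivity) (hA1 v).1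
  have hM₀' (v : EuclideanSpace ℝ (Fin d)) : M v ≠ 0 := (hM₀ v).ne'
  have hg := contDiff_div_ofReal hM hM₀' hψ
  have hg_supp := hasCompactSupport_div_ofReal hψ_supp M
  have h_lower (v : EuclideanSpace ℝ (Fin d)) :
      C₁ ^ 2 * (1 + ‖v‖ ^ 2) ^ (-γ) ≤ M v ^ 2 := by
    rw [← sqrt_rpow_sq (by positivity), ← mul_pow]
    exact pow_le_pow_left₀ (by positivity) (hA1 v).1 2
  have h_upper (v : EuclideanSpace ℝ (Fin d)) :
      M v ^ 2 ≤ C₂ ^ 2 * (1 + ‖v‖ ^ 2) ^ (-γ) := by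
    rw [← sqrt_rpow_sq (by positivity), ← mul_pow]
    exact pow_le_pow_left₀ (hM₀ v).le (hA1 v).2 2
  have h_hardy := integral_mul_sq_mul_norm_sq_le_of_bracket_le (μ := volume)
    (e := EuclideanSpace.single ⟨0, h0⟩ 1) (ℓ := EuclideanSpace.proj ⟨0, h0⟩) (by positivity)
    (hM.continuous.pow 2) h_lower h_upper hs (by simp) (by simp) hg hg_supp
  calc s ^ 2 * ∫ v, ‖ψ v‖ ^ 2 = ∫ v, M v ^ 2 * (s ^ 2 * ‖ψ v / (M v : ℂ)‖ ^ 2) := by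
        rw [← integral_const_mul]
        congr 1 with v
        rw [← sq_mul_norm_div_ofReal_sq (hM₀' v) (ψ v), mul_left_comm]
    _ ≤ _ := h_hardy
    _ ≤ C₂ ^ 2 / C₁ ^ 2 * ((3 + γ ^ 2) * HnormSq h0 M (s ^ 3) ψ) := by
        gcongr
        simpa using integral_sq_mul_norm_fderiv_div_apply_sq_add_le_HnormSq (p := -γ)
          (by positivity) (by simp) hM hM₀' hψ hψ_supp
    _ = C₂ ^ 2 / C₁ ^ 2 * (3 + γ ^ 2) * HnormSq h0 M (s ^ 3) ψ := (mul_assoc ..).symm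

lemma rpow_two_thirds_mul_integral_norm_sq_le_HnormSq {γ C₁ C₂ : ℝ} (hC₁ : 0 < C₁) (hη : 0 ≤ η)
    (hM : ContDiff ℝ 1 M)
    (hA1 : ∀ v, C₁ * √(1 + ‖v‖ ^ 2) ^ (-γ) ≤ M v ∧ M v ≤ C₂ * √(1 + ‖v‖ ^ 2) ^ (-γ))
    (hψ : ContDiff ℝ 1 ψ) (hψ_supp : HasCompactSupport ψ) :
    η ^ ((2 : ℝ) / 3) * ∫ v, ‖ψ v‖ ^ 2 ≤
      C₂ ^ 2 / C₁ ^ 2 * (3 + γ ^ 2) * HnormSq h0 M η ψ := by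
  have h_sq : (η ^ ((1 : ℝ) / 3)) ^ 2 = η ^ ((2 : ℝ) / 3) := by
    rw [← rpow_mul_natCast hη]
    norm_num
  have h_cube : (η ^ ((1 : ℝ) / 3)) ^ 3 = η := by
    rw [← rpow_mul_natCast hη]
    norm_num
  simpa only [h_sq, h_cube] using sq_mul_integral_norm_sq_le_HnormSq (h0 := h0)
    (s := η ^ ((1 : ℝ) / 3)) hC₁ (by positivity) hM hA1 hψ hψ_supp

variable {φ : EuclideanSpace ℝ (Fin d) → ℂ}

lemma norm_integral_sum_fderiv_mul_fderiv_mul_sq_le (hη : 0 ≤ η) (hM : ContDiff ℝ 1 M)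
    (hM₀ : ∀ v, M v ≠ 0) (hψ : ContDiff ℝ 1 ψ) (hψ_supp : HasCompactSupport ψ)
    (hφ : ContDiff ℝ 1 φ) (hφ_supp : HasCompactSupport φ) :
    ‖∫ v, (∑ i : Fin d, fderiv ℝ (fun w ↦ ψ w / (M w : ℂ)) v (EuclideanSpace.single i 1) *
        fderiv ℝ (fun w ↦ starRingEnd ℂ (φ w) / (M w : ℂ)) v (EuclideanSpace.single i 1)) *
          (M v : ℂ) ^ 2‖ ≤
      d * (√(HnormSq h0 M η ψ) * √(HnormSq h0 M η φ)) := by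
  refine norm_integral_le_mul_sqrt_mul_sqrt (Nat.cast_nonneg d)
    ((integrable_norm_fderiv_div_sq_mul_sq hM hM₀ hψ hψ_supp).const_mul d)
    ((integrable_norm_fderiv_div_sq_mul_sq hM hM₀ hφ hφ_supp).const_mul d)
    (fun v ↦ by positivity) (fun v ↦ by positivity) (fun v ↦ ?_) ?_ ?_
  · have h_conj : ‖fderiv ℝ (fun w ↦ starRingEnd ℂ (φ w) / (M w : ℂ)) v‖ =
        ‖fderiv ℝ (fun w ↦ φ w / (M w : ℂ)) v‖ := by
      simpa only [map_div₀, Complex.conj_ofReal] using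
        norm_fderiv_conj (fun w ↦ φ w / (M w : ℂ)) v
    have h_sum := norm_sum_apply_mul_apply_le Finset.univ
      (b := fun i : Fin d ↦ EuclideanSpace.single i (1 : ℝ)) (by simp)
      (fderiv ℝ (fun w ↦ ψ w / (M w : ℂ)) v)
      (fderiv ℝ (fun w ↦ starRingEnd ℂ (φ w) / (M w : ℂ)) v)
    rw [h_conj, Finset.card_fin] at h_sum
    rw [norm_mul, norm_pow, Complex.norm_real, norm_eq_abs, sq_abs]
    calc _ ≤ (d * (‖fderiv ℝ (fun w ↦ ψ w / (M w : ℂ)) v‖ *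
          ‖fderiv ℝ (fun w ↦ φ w / (M w : ℂ)) v‖) * M v ^ 2) ^ 2 := by gcongr
      _ = _ := by ring
  · rw [integral_const_mul]
    gcongr
    exact integral_norm_fderiv_div_sq_mul_sq_le_HnormSq hη
  · rw [integral_const_mul]
    gcongr
    exact integral_norm_fderiv_div_sq_mul_sq_le_HnormSq hη

lemma norm_integral_sqrt_rpow_mul_mul_conj_le {σ : ℝ} (hσ : 2 ≤ σ) (hη : 0 ≤ η)
    (hψ : Continuous ψ) (hψ_supp : HasCompactSupport ψ) (hφ : Continuous φ)
    (hφ_supp : HasCompactSupport φ) :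
    ‖∫ v, ((√(1 + ‖v‖ ^ 2) ^ (-σ) : ℝ) : ℂ) * (ψ v * starRingEnd ℂ (φ v))‖ ≤
      √(HnormSq h0 M η ψ) * √(HnormSq h0 M η φ) := by
  rw [← one_mul (√_ * _)]
  refine norm_integral_le_mul_sqrt_mul_sqrt zero_le_one
    (integrable_norm_sq_div_one_add_norm_sq hψ hψ_supp)
    (integrable_norm_sq_div_one_add_norm_sq hφ hφ_supp)
    (fun v ↦ by positivity) (fun v ↦ by positivity) (fun v ↦ ?_)
    (by simpa using integral_norm_sq_div_le_HnormSq hη)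
    (by simpa using integral_norm_sq_div_le_HnormSq hη)
  have h_weight : √(1 + ‖v‖ ^ 2) ^ (-σ) ≤ (1 + ‖v‖ ^ 2)⁻¹ :=
    calc √(1 + ‖v‖ ^ 2) ^ (-σ) ≤ √(1 + ‖v‖ ^ 2) ^ (-2 : ℝ) :=
          rpow_le_rpow_of_exponent_le (one_le_sqrt.2 (by simp)) (by linarith)
      _ = (1 + ‖v‖ ^ 2)⁻¹ := by
          rw [rpow_neg (sqrt_nonneg _), rpow_two, sq_sqrt (by positivity)]
  rw [norm_mul, norm_mul, Complex.norm_real, Complex.norm_conj, norm_of_nonneg (by positivity)]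
  calc (√(1 + ‖v‖ ^ 2) ^ (-σ) * (‖ψ v‖ * ‖φ v‖)) ^ 2
      ≤ ((1 + ‖v‖ ^ 2)⁻¹ * (‖ψ v‖ * ‖φ v‖)) ^ 2 := by gcongr
    _ = ‖ψ v‖ ^ 2 / (1 + ‖v‖ ^ 2) * (‖φ v‖ ^ 2 / (1 + ‖v‖ ^ 2)) := by ring

lemma norm_mul_integral_apply_mul_mul_conj_le (hη : 0 ≤ η)
    (hψ : Continuous ψ) (hψ_supp : HasCompactSupport ψ) (hφ : Continuous φ)
    (hφ_supp : HasCompactSupport φ) :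
    ‖Complex.I * η * ∫ v, ((v ⟨0, h0⟩ : ℝ) : ℂ) * (ψ v * starRingEnd ℂ (φ v))‖ ≤
      √(HnormSq h0 M η ψ) * √(HnormSq h0 M η φ) := by
  rw [← one_mul (√_ * _), ← integral_const_mul]
  refine norm_integral_le_mul_sqrt_mul_sqrt zero_le_one
    ((integrable_abs_apply_mul_norm_sq ⟨0, h0⟩ hψ hψ_supp).const_mul η)
    ((integrable_abs_apply_mul_norm_sq ⟨0, h0⟩ hφ hφ_supp).const_mul η)
    (fun v ↦ by positivity) (fun v ↦ by positivity) (fun v ↦ ?_) ?_ ?_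
  · simp only [norm_mul, Complex.norm_I, Complex.norm_real, Complex.norm_conj, norm_eq_abs,
      abs_of_nonneg hη]
    exact le_of_eq (by ring)
  · rw [integral_const_mul, one_mul]
    exact mul_integral_abs_apply_mul_norm_sq_le_HnormSq
  · rw [integral_const_mul, one_mul]
    exact mul_integral_abs_apply_mul_norm_sq_le_HnormSq

lemma norm_rpow_two_thirds_mul_integral_mul_conj_le {γ C₁ C₂ : ℝ} (hC₁ : 0 < C₁) (hη : 0 ≤ η)
    (hM : ContDiff ℝ 1 M)
    (hA1 : ∀ v, C₁ * √(1 + ‖v‖ ^ 2) ^ (-γ) ≤ M v ∧ M v ≤ C₂ * √(1 + ‖v‖ ^ 2) ^ (-γ))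
    (hψ : ContDiff ℝ 1 ψ) (hψ_supp : HasCompactSupport ψ) (hφ : ContDiff ℝ 1 φ)
    (hφ_supp : HasCompactSupport φ) :
    ‖((η ^ ((2 : ℝ) / 3) : ℝ) : ℂ) * ∫ v, ψ v * starRingEnd ℂ (φ v)‖ ≤
      C₂ ^ 2 / C₁ ^ 2 * (3 + γ ^ 2) * (√(HnormSq h0 M η ψ) * √(HnormSq h0 M η φ)) := by
  have h_int {f : EuclideanSpace ℝ (Fin d) → ℂ} (hf : ContDiff ℝ 1 f)
      (hf_supp : HasCompactSupport f) :
      Integrable fun v ↦ η ^ ((2 : ℝ) / 3) * ‖f v‖ ^ 2 :=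
    integrable_mul_norm_sq_s5 continuous_const hf.continuous hf_supp
  rw [← integral_const_mul]
  refine norm_integral_le_mul_sqrt_mul_sqrt (by positivity) (h_int hψ hψ_supp)
    (h_int hφ hφ_supp) (fun v ↦ by positivity) (fun v ↦ by positivity) (fun v ↦ ?_) ?_ ?_
  · rw [norm_mul, norm_mul, Complex.norm_real, Complex.norm_conj, norm_of_nonneg (by positivity)]
    exact le_of_eq (by ring)
  · rw [integral_const_mul]
    exact rpow_two_thirds_mul_integral_norm_sq_le_HnormSq hC₁ hη hM hA1 hψ hψ_supp
  · rw [integral_const_mul]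
    exact rpow_two_thirds_mul_integral_norm_sq_le_HnormSq hC₁ hη hM hA1 hφ hφ_supp

theorem aForm_continuous_general {γ σ C₁ C₂ : ℝ} (hC₁ : 0 < C₁) (hσ : 2 ≤ σ)
    (hM : ContDiff ℝ 1 M)
    (hA1 : ∀ v, C₁ * √(1 + ‖v‖ ^ 2) ^ (-γ) ≤ M v ∧ M v ≤ C₂ * √(1 + ‖v‖ ^ 2) ^ (-γ))
    (hη : 0 ≤ η) (l : ℂ) (hψ : ContDiff ℝ 1 ψ) (hψ_supp : HasCompactSupport ψ)
    (hφ : ContDiff ℝ 1 φ) (hφ_supp : HasCompactSupport φ) :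
    ‖aForm h0 M σ η l ψ φ‖ ≤ (d + 2 + ‖l‖ * (C₂ ^ 2 / C₁ ^ 2 * (3 + γ ^ 2))) *
      √(HnormSq h0 M η ψ) * √(HnormSq h0 M η φ) := by
  have hM₀ (v : EuclideanSpace ℝ (Fin d)) : 0 < M v :=
    lt_of_lt_of_le (by positivity) (hA1 v).1
  have h_gradient := norm_integral_sum_fderiv_mul_fderiv_mul_sq_le (h0 := h0) hη hM
    (fun v ↦ (hM₀ v).ne') hψ hψ_supp hφ hφ_supp
  have h_potential := norm_integral_sqrt_rpow_mul_mul_conj_le (h0 := h0) (M := M) hσ hη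
    hψ.continuous hψ_supp hφ.continuous hφ_supp
  have h_drift := norm_mul_integral_apply_mul_mul_conj_le (h0 := h0) (M := M) hη
    hψ.continuous hψ_supp hφ.continuous hφ_supp
  have h_mass := mul_le_mul_of_nonneg_left (norm_rpow_two_thirds_mul_integral_mul_conj_le
    (h0 := h0) hC₁ hη hM hA1 hψ hψ_supp hφ hφ_supp) (norm_nonneg l)
  rw [← norm_mul, ← mul_assoc] at h_mass
  refine (norm_sub_le_of_le (norm_add_le_of_le (norm_add_le_of_le h_gradient h_potential)
    h_drift) h_mass).trans_eq ?_
  ring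

end EnergyNorm

/-- **Continuity of the sesquilinear form `a` on `H_η × H_η`** (Lemma 2.7 of the paper). -/
theorem aForm_continuous (d : ℕ) (h0 : 0 < d) (γ C₁ C₂ σ : ℝ)
    (hγ₁ : (d : ℝ) / 2 < γ) (hγ₂ : γ < ((d : ℝ) + 4) / 2)
    (hC₁ : 0 < C₁) (hC₁₂ : C₁ ≤ C₂) (hσ₁ : 2 < σ) (hσ₂ : σ < 2 * γ - d + 4)
    (M : EuclideanSpace ℝ (Fin d) → ℝ) (hMpos : ∀ v, 0 < M v) (hM : ContDiff ℝ 1 M)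
    (hA1 : ∀ v, C₁ * Real.sqrt (1 + ‖v‖ ^ 2) ^ (-γ) ≤ M v ∧
              M v ≤ C₂ * Real.sqrt (1 + ‖v‖ ^ 2) ^ (-γ))
    (l₀ : ℝ) (hl₀ : 0 < l₀) :
    ∃ C : ℝ, 0 < C ∧
      ∀ η : ℝ, 0 < η → ∀ l : ℂ, ‖l‖ ≤ l₀ →
        ∀ ψ φ : EuclideanSpace ℝ (Fin d) → ℂ,
          ContDiff ℝ (⊤ : ℕ∞) ψ → HasCompactSupport ψ →
          ContDiff ℝ (⊤ : ℕ∞) φ → HasCompactSupport φ →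
          ‖aForm h0 M σ η l ψ φ‖ ≤
            C * Real.sqrt (HnormSq h0 M η ψ) * Real.sqrt (HnormSq h0 M η φ) := by
  refine ⟨d + 2 + l₀ * (C₂ ^ 2 / C₁ ^ 2 * (3 + γ ^ 2)), by positivity,
    fun η hη l hl ψ φ hψ hψ_supp hφ hφ_supp ↦ ?_⟩
  have h_smooth : (1 : WithTop ℕ∞) ≤ (⊤ : ℕ∞) := by exact_mod_cast le_top
  refine (aForm_continuous_general hC₁ hσ₁.le hM hA1 hη.le l (hψ.of_le h_smooth) hψ_supp
    (hφ.of_le h_smooth) hφ_supp).trans ?_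
  gcongr
end
end

section
/- Let η > 0 and λ ∈ ℂ. Let N : ℝ^d → ℂ be a twice continuously differentiable function with ∫ |N|² dv < ∞ and ∫ |∇N|² dv < ∞, satisfying pointwise the penalized equation −ΔN + WN + iηv₁N − λη^{2/3}N = −bΦ on ℝ^d with b := ∫ (N − M)Φ dv, and assume v ↦ v₁ N(v) M(v) is integrable on ℝ^d. Then b = η^{2/3} ∫_{ℝ^d} (λ − i η^{1/3} v₁) N(v) M(v) dv. -/
open MeasureTheory Real

noncomputable section

/-- The Laplacian on `ℝ^d`, as the sum of the second partial derivatives. -/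
def lap {d : ℕ} {E : Type*} [NormedAddCommGroup E] [NormedSpace ℝ E]
    (f : EuclideanSpace ℝ (Fin d) → E) (v : EuclideanSpace ℝ (Fin d)) : E :=
  ∑ i : Fin d, fderiv ℝ (fun w => fderiv ℝ f w (EuclideanSpace.single i (1 : ℝ))) v
    (EuclideanSpace.single i (1 : ℝ))

/-- The penalization function `Φ := (∫ M²⟨v⟩⁻²)⁻¹ M ⟨v⟩⁻²`, so that `∫ M Φ = 1`. -/
def Phi {d : ℕ} (M : EuclideanSpace ℝ (Fin d) → ℝ) (v : EuclideanSpace ℝ (Fin d)) : ℝ :=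
  (∫ w, (M w) ^ 2 / (1 + ‖w‖ ^ 2))⁻¹ * (M v / (1 + ‖v‖ ^ 2))

/-!
Since `M` is in the kernel of the symmetric operator `-Δ + W`, pairing the penalized equation with
`M` removes `-Δ + W` and leaves `iη ∫ v₁ N M - λ η^{2/3} ∫ N M = -b ∫ M Φ = -b`. The symmetry is
Green's identity `∫ (M ΔN - N ΔM) = ∫ div (M ∇N - N ∇M) = 0`. The field `M ∇N - N ∇M` is integrable
by Cauchy-Schwarz and its divergence is integrable by the equation, although `M ΔN` and `N ΔM`
separately need not be; so one integrates by parts against a cutoff at scale `n`, whose gradient is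
`O(1/n)`, and lets `n → ∞`.
-/

section Divergence

open Filter Topology

variable {V E : Type*} [NormedAddCommGroup V] [NormedSpace ℝ V]
  [NormedAddCommGroup E] [NormedSpace ℝ E]

/-- A sequence of `C¹` cutoffs: compactly supported functions with values in `[-1, 1]` that converge
pointwise to `1`, with gradients converging uniformly to `0`. -/
structure IsCutoffSeq (χ : ℕ → V → ℝ) : Prop where
  contDiff : ∀ n, ContDiff ℝ 1 (χ n)
  hasCompactSupport : ∀ n, HasCompactSupport (χ n)
  norm_le_one : ∀ n v, ‖χ n v‖ ≤ 1
  tendsto_one : ∀ v, Tendsto (fun n => χ n v) atTop (𝓝 1)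
  tendstoUniformly_fderiv : TendstoUniformly (fun n => fderiv ℝ (χ n)) 0 atTop

lemma tendstoUniformly_fderiv_comp_smul {f : V → E} {C : ℝ} (hC : ∀ v, ‖fderiv ℝ f v‖ ≤ C)
    {c : ℕ → ℝ} (hc : Tendsto c atTop (𝓝 0)) :
    TendstoUniformly (fun n => fderiv ℝ fun v => f (c n • v)) 0 atTop := by
  have hlim : Tendsto (fun n => ‖c n‖ * C) atTop (𝓝 0) := by
    simpa only [norm_zero, zero_mul] using hc.norm.mul_const C
  refine Metric.tendstoUniformly_iff.2 fun ε hε => ?_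
  filter_upwards [hlim.eventually_lt_const hε] with n hn v
  calc dist 0 (fderiv ℝ (fun w => f (c n • w)) v)
      = ‖c n‖ * ‖fderiv ℝ f (c n • v)‖ := by rw [dist_zero_left, fderiv_comp_smul, norm_smul]
    _ ≤ ‖c n‖ * C := by gcongr; exact hC _
    _ < ε := hn

variable (V) in
lemma exists_isCutoffSeq [FiniteDimensional ℝ V] : ∃ χ : ℕ → V → ℝ, IsCutoffSeq χ := by
  let φ : ContDiffBump (0 : V) := ⟨1, 2, one_pos, one_lt_two⟩
  have hφ : ContDiff ℝ 1 φ := φ.contDiff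
  obtain ⟨C, hC⟩ : ∃ C, ∀ v, ‖fderiv ℝ φ v‖ ≤ C :=
    (φ.hasCompactSupport.fderiv (𝕜 := ℝ)).exists_bound_of_continuous
      (hφ.continuous_fderiv one_ne_zero)
  let c : ℕ → ℝ := fun n => 1 / ((n : ℝ) + 1)
  have hc : Tendsto c atTop (𝓝 0) := tendsto_one_div_add_atTop_nhds_zero_nat
  refine ⟨fun n v => φ (c n • v), fun n => hφ.comp (contDiff_const_smul _),
    fun n => φ.hasCompactSupport.comp_smul (by positivity), fun n v => ?_, fun v => ?_,
    tendstoUniformly_fderiv_comp_smul hC hc⟩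
  · rw [Real.norm_of_nonneg φ.nonneg]
    exact φ.le_one
  · have hφ0 : φ 0 = 1 := φ.one_of_mem_closedBall (Metric.mem_closedBall_self zero_le_one)
    have hcv : Tendsto (fun n => c n • v) atTop (𝓝 0) := by
      simpa only [zero_smul] using hc.smul_const v
    exact hφ0 ▸ (hφ.continuous.tendsto 0).comp hcv

variable [MeasurableSpace V] [BorelSpace V] {μ : Measure V}

lemma IsCutoffSeq.tendsto_integral_smul {χ : ℕ → V → ℝ} (hχ : IsCutoffSeq χ) {g : V → E}
    (hg : Integrable g μ) :
    Tendsto (fun n => ∫ v, χ n v • g v ∂μ) atTop (𝓝 (∫ v, g v ∂μ)) := by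
  refine tendsto_integral_of_dominated_convergence (fun v => ‖g v‖)
    (fun n => (hχ.contDiff n).continuous.aestronglyMeasurable.smul hg.1) hg.norm
    (fun n => .of_forall fun v => ?_) (.of_forall fun v => ?_)
  · rw [norm_smul]
    exact mul_le_of_le_one_left (norm_nonneg _) (hχ.norm_le_one n v)
  · simpa only [one_smul] using (hχ.tendsto_one v).smul_const (g v)

lemma IsCutoffSeq.tendsto_integral_fderiv_smul {χ : ℕ → V → ℝ} (hχ : IsCutoffSeq χ) {f : V → E}
    (hf : Integrable f μ) (e : V) :
    Tendsto (fun n => ∫ v, fderiv ℝ (χ n) v e • f v ∂μ) atTop (𝓝 0) := by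
  rw [← integral_zero V E (μ := μ)]
  refine tendsto_integral_filter_of_dominated_convergence (fun v => ‖e‖ * ‖f v‖)
    (.of_forall fun n => ?_) ?_ (hf.norm.const_mul _) (.of_forall fun v => ?_)
  · exact (((hχ.contDiff n).continuous_fderiv one_ne_zero).clm_apply
      continuous_const).aestronglyMeasurable.smul hf.1
  · filter_upwards [Metric.tendstoUniformly_iff.1 hχ.tendstoUniformly_fderiv 1 one_pos] with n hn
    refine .of_forall fun v => ?_
    have hfderiv : ‖fderiv ℝ (χ n) v‖ ≤ 1 := by
      simpa only [Pi.zero_apply, dist_zero_left] using (hn v).le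
    rw [norm_smul]
    gcongr
    simpa only [one_mul] using (fderiv ℝ (χ n) v).le_of_opNorm_le hfderiv e
  · have hv : Tendsto (fun n => fderiv ℝ (χ n) v e) atTop (𝓝 0) :=
      ((ContinuousLinearMap.apply ℝ ℝ e).continuous.tendsto 0).comp
        (hχ.tendstoUniformly_fderiv.tendsto_at v)
    simpa only [zero_smul] using hv.smul_const (f v)

lemma integrable_smul_fderiv_of_hasCompactSupport [IsFiniteMeasureOnCompacts μ] {χ : V → ℝ}
    (hχ : Continuous χ) (hsupp : HasCompactSupport χ) {f : V → E} (hf : ContDiff ℝ 1 f) (e : V) :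
    Integrable (fun v => χ v • fderiv ℝ f v e) μ :=
  (hχ.smul ((hf.continuous_fderiv one_ne_zero).clm_apply
    continuous_const)).integrable_of_hasCompactSupport hsupp.smul_right

variable [FiniteDimensional ℝ V] [μ.IsAddHaarMeasure]

lemma integral_smul_fderiv_eq_neg_of_hasCompactSupport {χ : V → ℝ} (hχ : ContDiff ℝ 1 χ)
    (hsupp : HasCompactSupport χ) {f : V → E} (hf : ContDiff ℝ 1 f) (e : V) :
    ∫ v, χ v • fderiv ℝ f v e ∂μ = -∫ v, fderiv ℝ χ v e • f v ∂μ := by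
  refine integral_smul_fderiv_eq_neg_fderiv_smul_of_integrable ?_
    (integrable_smul_fderiv_of_hasCompactSupport hχ.continuous hsupp hf e) ?_
    (fun v _ => hχ.differentiable one_ne_zero v) (fun v _ => hf.differentiable one_ne_zero v)
  · exact (((hχ.continuous_fderiv one_ne_zero).clm_apply continuous_const).smul
      hf.continuous).integrable_of_hasCompactSupport
        (hsupp.fderiv_apply (𝕜 := ℝ) e).smul_right
  · exact (hχ.continuous.smul hf.continuous).integrable_of_hasCompactSupport hsupp.smul_right

theorem integral_sum_fderiv_eq_zero {ι : Type*} [Fintype ι] {F : ι → V → E} {e : ι → V}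
    (hF : ∀ i, ContDiff ℝ 1 (F i)) (hFint : ∀ i, Integrable (F i) μ)
    (hdiv : Integrable (fun v => ∑ i, fderiv ℝ (F i) v (e i)) μ) :
    ∫ v, ∑ i, fderiv ℝ (F i) v (e i) ∂μ = 0 := by
  obtain ⟨χ, hχ⟩ := exists_isCutoffSeq V
  have hparts (n : ℕ) : ∫ v, χ n v • ∑ i, fderiv ℝ (F i) v (e i) ∂μ =
      -∑ i, ∫ v, fderiv ℝ (χ n) v (e i) • F i v ∂μ := by
    simp_rw [Finset.smul_sum]
    rw [integral_finsetSum _ fun i _ => integrable_smul_fderiv_of_hasCompactSupport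
      (hχ.contDiff n).continuous (hχ.hasCompactSupport n) (hF i) (e i), ← Finset.sum_neg_distrib]
    exact Finset.sum_congr rfl fun i _ => integral_smul_fderiv_eq_neg_of_hasCompactSupport
      (hχ.contDiff n) (hχ.hasCompactSupport n) (hF i) (e i)
  have hlim : Tendsto (fun n => -∑ i, ∫ v, fderiv ℝ (χ n) v (e i) • F i v ∂μ) atTop (𝓝 0) := by
    simpa only [Finset.sum_const_zero, neg_zero] using
      (tendsto_finsetSum Finset.univ fun i _ =>
        hχ.tendsto_integral_fderiv_smul (hFint i) (e i)).neg
  exact tendsto_nhds_unique (hχ.tendsto_integral_smul hdiv) (by simpa only [hparts] using hlim)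

end Divergence

section Green

lemma contDiff_one_fderiv_apply {V E : Type*} [NormedAddCommGroup V] [NormedSpace ℝ V]
    [NormedAddCommGroup E] [NormedSpace ℝ E] {f : V → E} (hf : ContDiff ℝ 2 f) (e : V) :
    ContDiff ℝ 1 fun v => fderiv ℝ f v e :=
  (hf.fderiv_right one_add_one_eq_two.le).clm_apply contDiff_const

variable {d : ℕ} {E : Type*} [NormedAddCommGroup E] [NormedSpace ℝ E]
  {f : EuclideanSpace ℝ (Fin d) → ℝ} {g : EuclideanSpace ℝ (Fin d) → E}

lemma smul_lap_sub_lap_smul (hf : ContDiff ℝ 2 f) (hg : ContDiff ℝ 2 g)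
    (v : EuclideanSpace ℝ (Fin d)) :
    f v • lap g v - lap f v • g v = ∑ i, fderiv ℝ
      (fun w => f w • fderiv ℝ g w (EuclideanSpace.single i 1)
        - fderiv ℝ f w (EuclideanSpace.single i 1) • g w) v (EuclideanSpace.single i 1) := by
  rw [lap, lap, Finset.smul_sum, Finset.sum_smul, ← Finset.sum_sub_distrib]
  refine Finset.sum_congr rfl fun i _ => ?_
  have hf₀ : DifferentiableAt ℝ f v := hf.differentiable two_ne_zero v
  have hg₀ : DifferentiableAt ℝ g v := hg.differentiable two_ne_zero v
  have hf₁ : DifferentiableAt ℝ (fun w => fderiv ℝ f w (EuclideanSpace.single i 1)) v :=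
    (contDiff_one_fderiv_apply hf _).differentiable one_ne_zero v
  have hg₁ : DifferentiableAt ℝ (fun w => fderiv ℝ g w (EuclideanSpace.single i 1)) v :=
    (contDiff_one_fderiv_apply hg _).differentiable one_ne_zero v
  rw [fderiv_fun_sub (hf₀.fun_smul hg₁) (hf₁.fun_smul hg₀), fderiv_fun_smul hf₀ hg₁,
    fderiv_fun_smul hf₁ hg₀]
  simp only [sub_apply, add_apply, smul_apply, ContinuousLinearMap.smulRight_apply]
  abel

theorem integral_smul_lap_sub_lap_smul (hf : ContDiff ℝ 2 f) (hg : ContDiff ℝ 2 g)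
    (hfL2 : MemLp f 2) (hgradf : MemLp (fderiv ℝ f) 2)
    (hgL2 : MemLp g 2) (hgradg : MemLp (fderiv ℝ g) 2)
    (hint : Integrable fun v => f v • lap g v - lap f v • g v) :
    ∫ v, (f v • lap g v - lap f v • g v) = 0 := by
  have hfield (i : Fin d) : Integrable fun v => f v • fderiv ℝ g v (EuclideanSpace.single i 1)
      - fderiv ℝ f v (EuclideanSpace.single i 1) • g v :=
    (memLp_one_iff_integrable.1 (((ContinuousLinearMap.apply ℝ E _).comp_memLp' hgradg).smul
      hfL2)).sub
    (memLp_one_iff_integrable.1 (hgL2.smul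
      ((ContinuousLinearMap.apply ℝ ℝ _).comp_memLp' hgradf)))
  simp only [smul_lap_sub_lap_smul hf hg] at hint ⊢
  exact integral_sum_fderiv_eq_zero (fun i =>
    ((hf.of_le one_le_two).smul (contDiff_one_fderiv_apply hg _)).sub
      ((contDiff_one_fderiv_apply hf _).smul (hg.of_le one_le_two))) hfield hint

end Green

section Weight

variable {V : Type*} [NormedAddCommGroup V] [MeasurableSpace V] [BorelSpace V] {μ : Measure V}

lemma memLp_sqrt_one_add_norm_sq_rpow_neg [NormedSpace ℝ V] [FiniteDimensional ℝ V]
    [μ.IsAddHaarMeasure] {p : ENNReal} {γ : ℝ} (hγ : Module.finrank ℝ V < p.toReal * γ) :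
    MemLp (fun v : V => √(1 + ‖v‖ ^ 2) ^ (-γ)) p μ := by
  have hp : p.toReal ≠ 0 := by
    intro h
    rw [h, zero_mul] at hγ
    exact hγ.not_ge (Nat.cast_nonneg _)
  have hmeas : AEStronglyMeasurable (fun v : V => √(1 + ‖v‖ ^ 2) ^ (-γ)) μ :=
    Measurable.aestronglyMeasurable (by fun_prop)
  rw [← integrable_norm_rpow_iff hmeas (ENNReal.toReal_ne_zero.1 hp).1
    (ENNReal.toReal_ne_zero.1 hp).2]
  refine (integrable_rpow_neg_one_add_norm_sq hγ).congr (.of_forall fun v => ?_)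
  have hpos : (0 : ℝ) ≤ 1 + ‖v‖ ^ 2 := by positivity
  dsimp only
  rw [Real.norm_of_nonneg (by positivity), Real.sqrt_eq_rpow, ← Real.rpow_mul hpos,
    ← Real.rpow_mul hpos]
  ring_nf

lemma memLp_of_norm_le_mul_sqrt_rpow_neg [NormedSpace ℝ V] [FiniteDimensional ℝ V]
    [μ.IsAddHaarMeasure] {E : Type*} [NormedAddCommGroup E] {p : ENNReal} {γ C : ℝ}
    (hγ : Module.finrank ℝ V < p.toReal * γ) {f : V → E} (hf : AEStronglyMeasurable f μ)
    (hle : ∀ v, ‖f v‖ ≤ C * √(1 + ‖v‖ ^ 2) ^ (-γ)) : MemLp f p μ :=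
  (memLp_sqrt_one_add_norm_sq_rpow_neg hγ).of_le_mul hf <| .of_forall fun v =>
    (hle v).trans_eq (by rw [Real.norm_of_nonneg (by positivity)])

lemma integrable_sq_div_one_add_norm_sq {f : V → ℝ} (hf : MemLp f 2 μ) :
    Integrable (fun v => f v ^ 2 / (1 + ‖v‖ ^ 2)) μ := by
  have hmeas : Measurable fun v : V => 1 + ‖v‖ ^ 2 := by fun_prop
  refine hf.integrable_sq.mono (hf.integrable_sq.1.div₀ hmeas.aestronglyMeasurable)
    (.of_forall fun v => ?_)
  rw [norm_div]
  refine div_le_self (norm_nonneg _) ?_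
  rw [Real.norm_of_nonneg (by positivity)]
  exact le_add_of_nonneg_right (sq_nonneg _)

lemma integral_mul_Phi {d : ℕ} {M : EuclideanSpace ℝ (Fin d) → ℝ} (hMcont : Continuous M)
    (hM : MemLp M 2) (hM0 : M ≠ 0) : ∫ v, M v * Phi M v = 1 := by
  obtain ⟨v₀, hv₀⟩ := Function.ne_iff.1 hM0
  have hcont : Continuous fun v => M v ^ 2 / (1 + ‖v‖ ^ 2) :=
    (hMcont.pow 2).div (by fun_prop) fun v => by positivity
  have hpos : 0 < ∫ v, M v ^ 2 / (1 + ‖v‖ ^ 2) :=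
    integral_pos_of_integrable_nonneg_nonzero hcont (integrable_sq_div_one_add_norm_sq hM)
      (fun v => by positivity) (div_ne_zero (pow_ne_zero 2 hv₀) (by positivity))
  calc ∫ v, M v * Phi M v
      = ∫ v, (∫ w, M w ^ 2 / (1 + ‖w‖ ^ 2))⁻¹ * (M v ^ 2 / (1 + ‖v‖ ^ 2)) := by
        congr 1 with v
        rw [Phi]
        ring
    _ = 1 := by rw [integral_const_mul, inv_mul_cancel₀ hpos.ne']

end Weight

section Penalized

variable {d : ℕ} {M W x Φ : EuclideanSpace ℝ (Fin d) → ℝ} {N : EuclideanSpace ℝ (Fin d) → ℂ}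
  {η : ℝ} {l b : ℂ}

lemma smul_lap_sub_lap_smul_of_penalized (hW : ∀ v, lap M v = W v * M v) {a s : ℂ}
    (heq : ∀ v, -(lap N v) + W v * N v + a * x v * N v - s * N v = -b * Φ v)
    (v : EuclideanSpace ℝ (Fin d)) :
    M v • lap N v - lap M v • N v =
      a * (x v * N v * M v) - s * (N v * M v) + b * (M v * Φ v : ℝ) := by
  rw [hW, Complex.real_smul, Complex.real_smul]
  push_cast
  linear_combination -(M v : ℂ) * heq v

theorem eq_mul_integral_sub_mul_integral_of_penalized (hM : ContDiff ℝ 2 M) (hML2 : MemLp M 2)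
    (hgradM : MemLp (fderiv ℝ M) 2) (hW : ∀ v, lap M v = W v * M v) (hΦ : ∫ v, M v * Φ v = 1)
    (hN : ContDiff ℝ 2 N) (hNL2 : MemLp N 2) (hgradN : MemLp (fderiv ℝ N) 2) {a s : ℂ}
    (heq : ∀ v, -(lap N v) + W v * N v + a * x v * N v - s * N v = -b * Φ v)
    (hint : Integrable fun v => (x v : ℂ) * N v * M v) :
    b = s * (∫ v, N v * M v) - a * ∫ v, x v * N v * M v := by
  have hNM : Integrable fun v => N v * (M v : ℂ) := hNL2.integrable_mul hML2.ofReal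
  have hMΦ : Integrable fun v => ((M v * Φ v : ℝ) : ℂ) :=
    (integrable_of_integral_eq_one hΦ).ofReal
  have hdiff : Integrable fun v => a * (x v * N v * M v) - s * (N v * M v) :=
    (hint.const_mul a).sub (hNM.const_mul s)
  have hgreen := integral_smul_lap_sub_lap_smul hM hN hML2 hgradM hNL2 hgradN
  simp only [smul_lap_sub_lap_smul_of_penalized hW heq] at hgreen
  have hzero := hgreen (hdiff.add (hMΦ.const_mul b))
  rw [integral_add hdiff (hMΦ.const_mul b), integral_sub (hint.const_mul a) (hNM.const_mul s),
    integral_const_mul, integral_const_mul, integral_const_mul, integral_complex_ofReal, hΦ,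
    Complex.ofReal_one] at hzero
  linear_combination hzero

theorem penalized_term_identity_general (hM : ContDiff ℝ 2 M) (hML2 : MemLp M 2)
    (hgradM : MemLp (fderiv ℝ M) 2) (hW : ∀ v, lap M v = W v * M v) (hΦ : ∫ v, M v * Φ v = 1)
    (hη : 0 ≤ η) (hN : ContDiff ℝ 2 N) (hNL2 : MemLp N 2) (hgradN : MemLp (fderiv ℝ N) 2)
    (heq : ∀ v, -(lap N v) + W v * N v + Complex.I * η * x v * N v
      - l * (η ^ ((2 : ℝ) / 3) : ℝ) * N v = -b * Φ v)
    (hint : Integrable fun v => (x v : ℂ) * N v * M v) :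
    b = (η ^ ((2 : ℝ) / 3) : ℝ) *
      ∫ v, (l - Complex.I * (η ^ ((1 : ℝ) / 3) : ℝ) * x v) * N v * M v := by
  have hNM : Integrable fun v => N v * (M v : ℂ) := hNL2.integrable_mul hML2.ofReal
  have hpow : ((η ^ ((2 : ℝ) / 3) : ℝ) : ℂ) * (η ^ ((1 : ℝ) / 3) : ℝ) = η := by
    rw [← Complex.ofReal_mul, ← Real.rpow_add' hη (by norm_num)]
    norm_num
  have hsplit : ∫ v, (l - Complex.I * (η ^ ((1 : ℝ) / 3) : ℝ) * x v) * N v * M v =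
      l * (∫ v, N v * M v) - Complex.I * (η ^ ((1 : ℝ) / 3) : ℝ) * ∫ v, x v * N v * M v := by
    rw [← integral_const_mul, ← integral_const_mul,
      ← integral_sub (hNM.const_mul _) (hint.const_mul _)]
    congr 1 with v
    ring
  rw [hsplit, eq_mul_integral_sub_mul_integral_of_penalized hM hML2 hgradM hW hΦ hN hNL2 hgradN
    heq hint]
  linear_combination Complex.I * (∫ v, x v * N v * M v) * hpow

end Penalized

/-- **Identity for the penalized term** (item 1 of Proposition 3.3 of the paper):
`b = η^{2/3} ∫ (λ − i η^{1/3} v₁) N M dv`. -/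
theorem penalized_term_identity (d : ℕ) (h0 : 0 < d) (γ C₁ C₂ C₃ : ℝ)
    (hγ : (d : ℝ) / 2 < γ)
    (hC₁ : 0 < C₁) (hC₁₂ : C₁ ≤ C₂) (hC₂₃ : C₂ ≤ C₃)
    (M : EuclideanSpace ℝ (Fin d) → ℝ) (hMpos : ∀ v, 0 < M v) (hM : ContDiff ℝ 2 M)
    (hA1 : ∀ v, C₁ * Real.sqrt (1 + ‖v‖ ^ 2) ^ (-γ) ≤ M v ∧
              M v ≤ C₂ * Real.sqrt (1 + ‖v‖ ^ 2) ^ (-γ))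
    (hgradM : ∀ v, ‖fderiv ℝ M v‖ ≤ C₃ * Real.sqrt (1 + ‖v‖ ^ 2) ^ (-γ))
    (η : ℝ) (hη : 0 < η) (l : ℂ)
    (N : EuclideanSpace ℝ (Fin d) → ℂ) (hN : ContDiff ℝ 2 N)
    (hNL2 : Integrable (fun v => ‖N v‖ ^ 2))
    (hgradN : Integrable (fun v => ‖fderiv ℝ N v‖ ^ 2))
    (heq : ∀ v, -(lap N v) + ((lap M v / M v : ℝ) : ℂ) * N v
        + Complex.I * (η : ℂ) * ((v (⟨0, h0⟩ : Fin d) : ℝ) : ℂ) * N v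
        - l * ((η ^ ((2 : ℝ) / 3) : ℝ) : ℂ) * N v =
      -(∫ w, (N w - (M w : ℂ)) * ((Phi M w : ℝ) : ℂ)) * ((Phi M v : ℝ) : ℂ))
    (hint : Integrable (fun v =>
        ((v (⟨0, h0⟩ : Fin d) : ℝ) : ℂ) * N v * ((M v : ℝ) : ℂ))) :
    (∫ v, (N v - (M v : ℂ)) * ((Phi M v : ℝ) : ℂ)) =
      ((η ^ ((2 : ℝ) / 3) : ℝ) : ℂ) *
        ∫ v, (l - Complex.I * ((η ^ ((1 : ℝ) / 3) : ℝ) : ℂ) *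
            ((v (⟨0, h0⟩ : Fin d) : ℝ) : ℂ)) * N v * ((M v : ℝ) : ℂ) := by
  have hfinrank :
      (Module.finrank ℝ (EuclideanSpace ℝ (Fin d)) : ℝ) < (2 : ENNReal).toReal * γ := by
    rw [finrank_euclideanSpace_fin, ENNReal.toReal_ofNat]
    linarith
  have hML2 : MemLp M 2 :=
    memLp_of_norm_le_mul_sqrt_rpow_neg hfinrank hM.continuous.aestronglyMeasurable fun v =>
      (Real.norm_of_nonneg (hMpos v).le).trans_le (hA1 v).2
  have hgradML2 : MemLp (fderiv ℝ M) 2 :=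
    memLp_of_norm_le_mul_sqrt_rpow_neg hfinrank
      (hM.continuous_fderiv two_ne_zero).aestronglyMeasurable hgradM
  have hNmem : MemLp N 2 :=
    (memLp_two_iff_integrable_sq_norm hN.continuous.aestronglyMeasurable).2 hNL2
  have hgradNmem : MemLp (fderiv ℝ N) 2 := (memLp_two_iff_integrable_sq_norm
    (hN.continuous_fderiv two_ne_zero).aestronglyMeasurable).2 hgradN
  exact penalized_term_identity_general hM hML2 hgradML2
    (fun v => (div_mul_cancel₀ _ (hMpos v).ne').symm)
    (integral_mul_Phi hM.continuous hML2 (Function.ne_iff.2 ⟨0, (hMpos 0).ne'⟩)) hη.le hN hNmem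
    hgradNmem heq hint
end
end
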